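/- (Estimates for the resonant limit operators.) Let A, B ∈ (Ker L)^⊥ and let u be a divergence-free vector field on 𝕋_b^d. Then: (i) for σ, γ ≥ 0, ‖𝒬₁(u,A)‖_{H^{σ−1}} ≲ ‖A‖_{H^{σ+γ}} ‖|k|^{−γ}ℱu̲‖_{ℓ¹(Z̃^d)} + |û₀| ‖A‖_{H^σ}; (ii) for 1/2 < σ < 3/2, ‖𝒬₂(A,B)‖_{H^{σ−2}} ≲ min{ ‖A‖_{B^{1/2}_{2,1}} ‖B‖_{B^{σ−1}_{2,1}}, ‖B‖_{B^{1/2}_{2,1}} ‖A‖_{B^{σ−1}_{2,1}} }; (iii) for σ ≥ 3/2, ‖𝒬₂(A,B)‖_{H^{σ−2}} ≲ ‖A‖_{B^{σ−1}_{2,1}} ‖B‖_{B^{σ−1}_{2,1}}; (iv) for σ > −1/2, ‖𝒬₂(A,A)‖_{B^{σ−1}_{2,1}} ≲ ‖A‖_{B^{1/2}_{2,1}} ‖A‖_{B^{σ}_{2,1}}. -/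

import Mathlib

open MeasureTheory Filter Set
open scoped ENNReal Topology

noncomputable section

namespace LowMach

attribute [local instance 10] Classical.propDecidable

/-- Frequency lattice of the torus `𝕋_b^d` (indices of Fourier modes). -/
abbrev Lat (d : ℕ) := Fin d → ℤ
/-- A scalar periodic distribution, represented by its Fourier coefficients. -/
abbrev SF (d : ℕ) := Lat d → ℂ
/-- A vector-field periodic distribution, represented by its Fourier coefficients. -/
abbrev VF (d : ℕ) := Lat d → Fin d → ℂ
/-- A `(d+1)`-component field `(a, u)`. -/
abbrev PairF (d : ℕ) := SF d × VF d

variable {d : ℕ} {E : Type*}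

/-- `|𝕋_b^d| = ∏ 2π b_h`. -/
def vol (b : Fin d → ℝ) : ℝ := ∏ h, (2 * Real.pi * b h)

/-- the real frequency `k_i/b_i` attached to the lattice point `k`. -/
def freq (b : Fin d → ℝ) (k : Lat d) (i : Fin d) : ℝ := (k i : ℝ) / b i

/-- `|k|`, the euclidean norm of the frequency. -/
def freqNorm (b : Fin d → ℝ) (k : Lat d) : ℝ := Real.sqrt (∑ i, (freq b k i) ^ 2)

/-- generalized sign: `1` iff the first nonzero component of `k` is positive. -/
def sg (k : Lat d) : ℝ := if ∃ i, 0 < k i ∧ ∀ j, j < i → k j = 0 then 1 else -1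

/-- `ℓ^r` norm (`r ∈ [1,∞]`) of an `ℝ≥0∞`-valued family. -/
def lr {α : Type*} (r : ℝ≥0∞) (f : α → ℝ≥0∞) : ℝ≥0∞ :=
  if r = ∞ then ⨆ a, f a else (∑' a, f a ^ r.toReal) ^ (1 / r.toReal)

/-- The time interval `(0,T)` (`T ∈ (0,∞]`). -/
def timeSet (T : ℝ≥0∞) : Set ℝ := {t : ℝ | 0 < t ∧ ENNReal.ofReal t < T}
/-- The time interval `[0,T]` (`= [0,∞)` if `T = ∞`). -/
def ctimeSet (T : ℝ≥0∞) : Set ℝ := {t : ℝ | 0 ≤ t ∧ ENNReal.ofReal t ≤ T}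

/-- `L^q(0,T)` norm of an `ℝ≥0∞`-valued function of time. -/
def timeLq (q T : ℝ≥0∞) (F : ℝ → ℝ≥0∞) : ℝ≥0∞ :=
  if q = ∞ then essSup F (volume.restrict (timeSet T))
  else (∫⁻ t in timeSet T, F t ^ q.toReal) ^ (1 / q.toReal)

/-- exponential on `ℝ≥0∞`. -/
def eexp (x : ℝ≥0∞) : ℝ≥0∞ := if x = ∞ then ∞ else ENNReal.ofReal (Real.exp x.toReal)

/-- The hypotheses on the fixed Littlewood–Paley bump function `φ`. -/
def GoodBump (φ : ℝ → ℝ) : Prop :=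
  ContDiff ℝ (⊤ : ℕ∞) φ ∧ (∀ ξ, 0 ≤ φ ξ) ∧
  (∀ ξ, φ ξ ≠ 0 → 3/4 ≤ |ξ| ∧ |ξ| ≤ 8/3) ∧
  (∀ ξ : ℝ, ξ ≠ 0 → HasSum (fun j : ℤ => φ ((2:ℝ) ^ (-j) * ξ)) 1)

section ENorms
variable [NormedAddCommGroup E] [NormedSpace ℝ E]

/-- the weight `φ(2^{-j}|k|)` of the `j`-th dyadic block. -/
def blockW (φ : ℝ → ℝ) (b : Fin d → ℝ) (j : ℤ) (k : Lat d) : ℝ :=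
  φ ((2:ℝ) ^ (-j) * freqNorm b k)

/-- the dyadic block `Δ_j` acting on Fourier coefficients. -/
def blockOp (φ : ℝ → ℝ) (b : Fin d → ℝ) (j : ℤ) (c : Lat d → E) : Lat d → E :=
  fun k => blockW φ b j k • c k

/-- the multiplier of the low-frequency cut-off `S_j` at `k ≠ 0`. -/
def SW (φ : ℝ → ℝ) (b : Fin d → ℝ) (j : ℤ) (k : Lat d) : ℝ :=
  ∑' j' : ℤ, if j' < j then blockW φ b j' k else 0

/-- the low-frequency cut-off `S_j g = ĝ₀/√|𝕋| + ∑_{j'≤j-1} Δ_{j'} g`. -/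
def SOp (φ : ℝ → ℝ) (b : Fin d → ℝ) (j : ℤ) (c : Lat d → E) : Lat d → E :=
  fun k => (if k = 0 then (1:ℝ) else SW φ b j k) • c k

/-- `L²(𝕋_b^d)` norm, via Parseval. -/
def eL2 (c : Lat d → E) : ℝ≥0∞ := (∑' k, (‖c k‖₊ : ℝ≥0∞) ^ 2) ^ (1/2 : ℝ)

/-- `‖ℱg‖_{ℓ¹}`. -/
def l1F (c : Lat d → E) : ℝ≥0∞ := ∑' k, (‖c k‖₊ : ℝ≥0∞)

/-- the mean-zero (underlined) part of a periodic distribution. -/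
def ul (c : Lat d → E) : Lat d → E := fun k => if k = 0 then 0 else c k

/-- `2^{js}‖Δ_j g‖_{L²}`. -/
def bw (φ : ℝ → ℝ) (b : Fin d → ℝ) (s : ℝ) (c : Lat d → E) (j : ℤ) : ℝ≥0∞ :=
  (2:ℝ≥0∞) ^ ((j : ℝ) * s) * eL2 (blockOp φ b j c)

/-- The Besov norm `‖·‖_{B^s_{2,r}}`. -/
def besovN (φ : ℝ → ℝ) (b : Fin d → ℝ) (s : ℝ) (r : ℝ≥0∞) (c : Lat d → E) : ℝ≥0∞ :=
  lr r (fun o : Option ℤ => o.elim (‖c 0‖₊ : ℝ≥0∞) (bw φ b s c))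

/-- High-frequency truncated Besov norm `‖·‖^{h;η}_{B^s_{2,r}}` (blocks `2^j ≥ η`). -/
def besovH (φ : ℝ → ℝ) (b : Fin d → ℝ) (η s : ℝ) (r : ℝ≥0∞) (c : Lat d → E) : ℝ≥0∞ :=
  lr r (fun j : ℤ => if η ≤ (2:ℝ) ^ j then bw φ b s c j else 0)

/-- Medium-frequency truncated Besov norm `‖·‖^{m;ζ,η}_{B^s_{2,r}}` (blocks `ζ ≤ 2^j < η`). -/
def besovM (φ : ℝ → ℝ) (b : Fin d → ℝ) (ζ η s : ℝ) (r : ℝ≥0∞) (c : Lat d → E) : ℝ≥0∞ :=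
  lr r (fun j : ℤ => if ζ ≤ (2:ℝ) ^ j ∧ (2:ℝ) ^ j < η then bw φ b s c j else 0)

/-- Low-frequency truncated Besov norm `‖·‖^{l;ζ}_{B^s_{2,r}}` (blocks `2^j < ζ`, plus zero mode). -/
def besovL (φ : ℝ → ℝ) (b : Fin d → ℝ) (ζ s : ℝ) (r : ℝ≥0∞) (c : Lat d → E) : ℝ≥0∞ :=
  lr r (fun o : Option ℤ =>
    o.elim (‖c 0‖₊ : ℝ≥0∞) (fun j => if (2:ℝ) ^ j < ζ then bw φ b s c j else 0))

/-- The Sobolev norm `‖·‖_{H^s}`. -/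
def hsN (b : Fin d → ℝ) (s : ℝ) (c : Lat d → E) : ℝ≥0∞ :=
  ((‖c 0‖₊ : ℝ≥0∞) ^ 2 +
    ∑' k, (if k = 0 then 0
      else ENNReal.ofReal (freqNorm b k ^ (2*s)) * (‖c k‖₊ : ℝ≥0∞) ^ 2)) ^ (1/2 : ℝ)

/-- The Chemin–Lerner norm `‖·‖_{L̃^q_T(B^s_{2,r})}`. -/
def CL (φ : ℝ → ℝ) (b : Fin d → ℝ) (q T : ℝ≥0∞) (s : ℝ) (r : ℝ≥0∞)
    (F : ℝ → Lat d → E) : ℝ≥0∞ :=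
  lr r (fun o : Option ℤ => o.elim (timeLq q T (fun t => (‖F t 0‖₊ : ℝ≥0∞)))
    (fun j => (2:ℝ≥0∞) ^ ((j:ℝ) * s) * timeLq q T (fun t => eL2 (blockOp φ b j (F t)))))

/-- `‖·‖^{h;η}_{L̃^q_T(B^s_{2,r})}`. -/
def CLH (φ : ℝ → ℝ) (b : Fin d → ℝ) (η : ℝ) (q T : ℝ≥0∞) (s : ℝ) (r : ℝ≥0∞)
    (F : ℝ → Lat d → E) : ℝ≥0∞ :=
  lr r (fun j : ℤ => if η ≤ (2:ℝ) ^ j then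
    (2:ℝ≥0∞) ^ ((j:ℝ) * s) * timeLq q T (fun t => eL2 (blockOp φ b j (F t))) else 0)

/-- `‖·‖^{m;ζ,η}_{L̃^q_T(B^s_{2,r})}`. -/
def CLM (φ : ℝ → ℝ) (b : Fin d → ℝ) (ζ η : ℝ) (q T : ℝ≥0∞) (s : ℝ) (r : ℝ≥0∞)
    (F : ℝ → Lat d → E) : ℝ≥0∞ :=
  lr r (fun j : ℤ => if ζ ≤ (2:ℝ) ^ j ∧ (2:ℝ) ^ j < η then
    (2:ℝ≥0∞) ^ ((j:ℝ) * s) * timeLq q T (fun t => eL2 (blockOp φ b j (F t))) else 0)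

/-- `‖·‖^{l;ζ}_{L̃^q_T(B^s_{2,r})}`. -/
def CLL (φ : ℝ → ℝ) (b : Fin d → ℝ) (ζ : ℝ) (q T : ℝ≥0∞) (s : ℝ) (r : ℝ≥0∞)
    (F : ℝ → Lat d → E) : ℝ≥0∞ :=
  lr r (fun o : Option ℤ => o.elim (timeLq q T (fun t => (‖F t 0‖₊ : ℝ≥0∞)))
    (fun j => if (2:ℝ) ^ j < ζ then
      (2:ℝ≥0∞) ^ ((j:ℝ) * s) * timeLq q T (fun t => eL2 (blockOp φ b j (F t))) else 0))

/-- `‖·‖_{L^q_T(B^s_{2,r})}`. -/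
def LqB (φ : ℝ → ℝ) (b : Fin d → ℝ) (q T : ℝ≥0∞) (s : ℝ) (r : ℝ≥0∞)
    (F : ℝ → Lat d → E) : ℝ≥0∞ :=
  timeLq q T (fun t => besovN φ b s r (F t))

/-- `‖·‖^{h;η}_{L^q_T(B^s_{2,r})}`. -/
def LqBH (φ : ℝ → ℝ) (b : Fin d → ℝ) (η : ℝ) (q T : ℝ≥0∞) (s : ℝ) (r : ℝ≥0∞)
    (F : ℝ → Lat d → E) : ℝ≥0∞ :=
  timeLq q T (fun t => besovH φ b η s r (F t))

/-- `‖·‖^{m;ζ,η}_{L^q_T(B^s_{2,r})}`. -/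
def LqBM (φ : ℝ → ℝ) (b : Fin d → ℝ) (ζ η : ℝ) (q T : ℝ≥0∞) (s : ℝ) (r : ℝ≥0∞)
    (F : ℝ → Lat d → E) : ℝ≥0∞ :=
  timeLq q T (fun t => besovM φ b ζ η s r (F t))

/-- `‖·‖^{l;ζ}_{L^q_T(B^s_{2,r})}`. -/
def LqBL (φ : ℝ → ℝ) (b : Fin d → ℝ) (ζ : ℝ) (q T : ℝ≥0∞) (s : ℝ) (r : ℝ≥0∞)
    (F : ℝ → Lat d → E) : ℝ≥0∞ :=
  timeLq q T (fun t => besovL φ b ζ s r (F t))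

/-- `‖·‖_{L^q_T(H^s)}`. -/
def LqHs (b : Fin d → ℝ) (q T : ℝ≥0∞) (s : ℝ) (F : ℝ → Lat d → E) : ℝ≥0∞ :=
  timeLq q T (fun t => hsN b s (F t))

/-- continuity in time, on `[0,T]`, with respect to a seminorm `N`. -/
def ContB (T : ℝ≥0∞) (N : (Lat d → E) → ℝ≥0∞) (F : ℝ → Lat d → E) : Prop :=
  ∀ t₀ ∈ ctimeSet T,
    Tendsto (fun t => N (fun k => F t k - F t₀ k)) (nhdsWithin t₀ (ctimeSet T)) (nhds 0)

/-- Fourier truncation: keep frequencies `|k| ≤ M`. -/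
def cutL (b : Fin d → ℝ) (M : ℝ) (c : Lat d → E) : Lat d → E :=
  fun k => if freqNorm b k ≤ M then c k else 0

/-- Fourier truncation: keep frequencies `|k| > M`. -/
def cutH (b : Fin d → ℝ) (M : ℝ) (c : Lat d → E) : Lat d → E :=
  fun k => if freqNorm b k ≤ M then 0 else c k

end ENorms

/-! ### Differential and product operators on Fourier coefficients -/

/-- product of two scalar periodic distributions (convolution of coefficients). -/
def mulC (b : Fin d → ℝ) (f g : SF d) : SF d :=
  fun m => ((Real.sqrt (vol b) : ℂ))⁻¹ * ∑' k, f k * g (m - k)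

/-- `∂_i`. -/
def pd (b : Fin d → ℝ) (i : Fin d) (f : SF d) : SF d :=
  fun k => Complex.I * (freq b k i : ℂ) * f k

/-- `div`. -/
def divC (b : Fin d → ℝ) (u : VF d) : SF d :=
  fun k => ∑ i, Complex.I * (freq b k i : ℂ) * u k i

/-- `∇`. -/
def gradC (b : Fin d → ℝ) (f : SF d) : VF d :=
  fun k i => Complex.I * (freq b k i : ℂ) * f k

/-- `Δ` on scalars. -/
def lapS (b : Fin d → ℝ) (f : SF d) : SF d :=
  fun k => ((-(freqNorm b k ^ 2) : ℝ) : ℂ) * f k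

/-- `Δ` on vector fields. -/
def lapV (b : Fin d → ℝ) (u : VF d) : VF d :=
  fun k i => ((-(freqNorm b k ^ 2) : ℝ) : ℂ) * u k i

/-- `ℚ = -∇(-Δ)⁻¹ div`, the projection onto gradient fields. -/
def QC (b : Fin d → ℝ) (u : VF d) : VF d := fun k i =>
  if k = 0 then 0 else
    (freq b k i : ℂ) * (∑ j, (freq b k j : ℂ) * u k j) / ((freqNorm b k ^ 2 : ℝ) : ℂ)

/-- `ℙ = I - ℚ`, the Leray projection. -/
def PC (b : Fin d → ℝ) (u : VF d) : VF d := fun k i => u k i - QC b u k i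

/-- product of a scalar field and a vector field. -/
def smulV (b : Fin d → ℝ) (f : SF d) (u : VF d) : VF d :=
  fun k i => mulC b f (fun k' => u k' i) k

/-- scalar product `u · v` of two vector fields. -/
def dotC (b : Fin d → ℝ) (u v : VF d) : SF d :=
  fun k => ∑ i, mulC b (fun k' => u k' i) (fun k' => v k' i) k

/-- `u · ∇v`. -/
def dotGrad (b : Fin d → ℝ) (u v : VF d) : VF d :=
  fun k i => ∑ j, mulC b (fun k' => u k' j) (pd b j (fun k' => v k' i)) k

/-- the Lamé operator `𝒜u = μΔu + (μ+λ)∇div u`. -/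
def AOp (b : Fin d → ℝ) (μ lam : ℝ) (u : VF d) : VF d := fun k i =>
  (μ : ℂ) * ((-(freqNorm b k ^ 2) : ℝ) : ℂ) * u k i
  + ((μ + lam : ℝ) : ℂ) * Complex.I * (freq b k i : ℂ) * divC b u k

/-! ### Spatial realization -/

/-- the function realizing a periodic distribution. -/
def toFun (b : Fin d → ℝ) (c : SF d) (x : EuclideanSpace ℝ (Fin d)) : ℂ :=
  ((Real.sqrt (vol b) : ℂ))⁻¹ *
    ∑' k, c k * Complex.exp (Complex.I * ((∑ i, freq b k i * x i : ℝ) : ℂ))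

/-- `L^∞` norm of a scalar periodic distribution. -/
def linf (b : Fin d → ℝ) (c : SF d) : ℝ≥0∞ :=
  ⨆ x : EuclideanSpace ℝ (Fin d), (‖toFun b c x‖₊ : ℝ≥0∞)

/-- `L^∞` norm of a vector field. -/
def linfV (b : Fin d → ℝ) (u : VF d) : ℝ≥0∞ := ⨆ i : Fin d, linf b (fun k => u k i)

/-- `L^∞` norm of a matrix field. -/
def linfM (b : Fin d → ℝ) (m : Lat d → Fin d → Fin d → ℂ) : ℝ≥0∞ :=
  ⨆ i : Fin d, ⨆ i' : Fin d, linf b (fun k => m k i i')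

/-- the gradient `∇u` of a vector field, a matrix field. -/
def gradVF (b : Fin d → ℝ) (u : VF d) : Lat d → Fin d → Fin d → ℂ :=
  fun k i i' => Complex.I * (freq b k i : ℂ) * u k i'

/-- `L^∞((0,T) × 𝕋_b^d)` norm of a time dependent scalar field. -/
def linfST (b : Fin d → ℝ) (T : ℝ≥0∞) (a : ℝ → SF d) : ℝ≥0∞ :=
  ⨆ t ∈ timeSet T, linf b (a t)

/-- a fundamental domain of the torus. -/
def box (b : Fin d → ℝ) : Set (EuclideanSpace ℝ (Fin d)) :=
  {x | ∀ i, x i ∈ Set.Ico (0:ℝ) (2 * Real.pi * b i)}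

/-- Fourier coefficients of the composition `G ∘ f` for a real-valued `f`. -/
def compC (b : Fin d → ℝ) (G : ℝ → ℝ) (c : SF d) : SF d := fun k =>
  ((Real.sqrt (vol b) : ℂ))⁻¹ *
    ∫ x in box b, (G ((toFun b c x).re) : ℂ) *
      Complex.exp (-Complex.I * ((∑ i, freq b k i * x i : ℝ) : ℂ))

/-! ### `L^p`-based Besov norms (general `p`) -/

/-- `L^p(𝕋_b^d)` norm of the `j`-th dyadic block. -/
def blockLp (φ : ℝ → ℝ) (b : Fin d → ℝ) (p : ℝ≥0∞) (j : ℤ) (c : SF d) : ℝ≥0∞ :=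
  eLpNorm (toFun b (blockOp φ b j c)) p (volume.restrict (box b))

/-- `L^p(𝕋_b^d)` norm of the zero mode `ĝ₀/√|𝕋_b^d|`. -/
def zmLp (b : Fin d → ℝ) (p : ℝ≥0∞) (c : SF d) : ℝ≥0∞ :=
  eLpNorm (fun _ : EuclideanSpace ℝ (Fin d) => ((Real.sqrt (vol b) : ℂ))⁻¹ * c 0) p
    (volume.restrict (box b))

/-- the Besov norm `‖·‖_{B^s_{p,r}}`. -/
def besovP (φ : ℝ → ℝ) (b : Fin d → ℝ) (p : ℝ≥0∞) (s : ℝ) (r : ℝ≥0∞) (c : SF d) : ℝ≥0∞ :=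
  lr r (fun o : Option ℤ =>
    o.elim (zmLp b p c) (fun j => (2:ℝ≥0∞) ^ ((j:ℝ) * s) * blockLp φ b p j c))

/-- the Chemin–Lerner norm `‖·‖_{L̃^q_T(B^s_{p,r})}`. -/
def CLP (φ : ℝ → ℝ) (b : Fin d → ℝ) (p q T : ℝ≥0∞) (s : ℝ) (r : ℝ≥0∞)
    (F : ℝ → SF d) : ℝ≥0∞ :=
  lr r (fun o : Option ℤ => o.elim (timeLq q T (fun t => zmLp b p (F t)))
    (fun j => (2:ℝ≥0∞) ^ ((j:ℝ) * s) * timeLq q T (fun t => blockLp φ b p j (F t))))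

/-- `‖·‖_{L^q_T(B^s_{p,r})}`. -/
def LqBP (φ : ℝ → ℝ) (b : Fin d → ℝ) (p q T : ℝ≥0∞) (s : ℝ) (r : ℝ≥0∞)
    (F : ℝ → SF d) : ℝ≥0∞ :=
  timeLq q T (fun t => besovP φ b p s r (F t))

/-! ### Bony decomposition -/

/-- the paraproduct `T_f g = ∑_j S_{j-2} f Δ_j g`. -/
def paraC (φ : ℝ → ℝ) (b : Fin d → ℝ) (f g : SF d) : SF d :=
  fun m => ∑' j : ℤ, mulC b (SOp φ b (j - 2) f) (blockOp φ b j g) m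

/-- the Bony remainder `R(f,g) = ∑_{|j-j'|≤2} Δ_j f Δ_{j'} g`. -/
def remC (φ : ℝ → ℝ) (b : Fin d → ℝ) (f g : SF d) : SF d :=
  fun m => ∑' p : ℤ × ℤ,
    if |p.1 - p.2| ≤ 2 then mulC b (blockOp φ b p.1 f) (blockOp φ b p.2 g) m else 0

/-! ### The acoustic wave group and the filtered/resonant bilinear operators -/

/-- the acoustic group `𝓛(τ) = e^{-τL}`, `L(a,u) = (div u, ∇a)`, computed explicitly
on Fourier modes. -/
def Lgrp (b : Fin d → ℝ) (τ : ℝ) (A : PairF d) : PairF d :=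
  (fun k =>
    if k = 0 then A.1 k else
      ((Real.cos (freqNorm b k * τ) : ℝ) : ℂ) * A.1 k -
        Complex.I * ((Real.sin (freqNorm b k * τ) : ℝ) : ℂ) *
          ((∑ i, (freq b k i : ℂ) * A.2 k i) / ((freqNorm b k : ℝ) : ℂ)),
   fun k i =>
    if k = 0 then A.2 k i else
      A.2 k i +
        (((Real.cos (freqNorm b k * τ) - 1 : ℝ) : ℂ) *
            ((∑ j, (freq b k j : ℂ) * A.2 k j) / ((freqNorm b k : ℝ) : ℂ)) -
          Complex.I * ((Real.sin (freqNorm b k * τ) : ℝ) : ℂ) * A.1 k) *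
          ((freq b k i / freqNorm b k : ℝ) : ℂ))

/-- membership in `(Ker L)^⊥ = {(a,∇g) : a ∈ L² mean-zero, g ∈ H¹}`. -/
def memKerLp (b : Fin d → ℝ) (A : PairF d) : Prop :=
  A.1 0 = 0 ∧ eL2 A.1 < ⊤ ∧
  ∃ g : SF d, (∀ k i, A.2 k i = Complex.I * (freq b k i : ℂ) * g k) ∧ hsN b 1 g < ⊤

/-- coordinates of a pair in the eigenbasis `Φ_k^α` of `L`. -/
def eig (b : Fin d → ℝ) (A : PairF d) (α : ℝ) (k : Lat d) : ℂ :=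
  (A.1 k - ((α * sg k : ℝ) : ℂ) *
    (∑ i, ((freq b k i / freqNorm b k : ℝ) : ℂ) * A.2 k i)) / ((Real.sqrt 2 : ℝ) : ℂ)

/-- reconstruction of a pair from coordinates in the eigenbasis `Φ_k^α`. -/
def fromEig (b : Fin d → ℝ) (Ec : ℝ → Lat d → ℂ) : PairF d :=
  (fun k => (Ec 1 k + Ec (-1) k) / ((Real.sqrt 2 : ℝ) : ℂ),
   fun k i => -(((sg k * (freq b k i / freqNorm b k) : ℝ)) : ℂ) *
      (Ec 1 k - Ec (-1) k) / ((Real.sqrt 2 : ℝ) : ℂ))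

/-- the filtered operator `𝒬₁^ε(u,B)` (with `τ = t/ε`). -/
def Q1e (b : Fin d → ℝ) (τ : ℝ) (u : VF d) (B : PairF d) : PairF d :=
  Lgrp b (-τ)
    ((fun m => divC b (smulV b (Lgrp b τ B).1 u) m),
     (fun m i => QC b (fun k i' =>
        dotGrad b u (Lgrp b τ B).2 k i' + dotGrad b (Lgrp b τ B).2 u k i') m i))

/-- the modified filtered operator `𝒬̌₁^ε(u,B)`. -/
def Qc1e (b : Fin d → ℝ) (τ : ℝ) (u : VF d) (B : PairF d) : PairF d :=
  Lgrp b (-τ)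
    ((fun m => divC b (smulV b (Lgrp b τ B).1 u) m),
     (fun m i => QC b (fun k i' => ∑ j, Complex.I * (freq b k j : ℂ) *
        mulC b (fun k' => u k' j) (fun k' => (Lgrp b τ B).2 k' i') k) m i))

/-- `𝒬̃₁^ε := 𝒬₁^ε - 𝒬̌₁^ε`. -/
def Qt1e (b : Fin d → ℝ) (τ : ℝ) (u : VF d) (B : PairF d) : PairF d :=
  (fun k => (Q1e b τ u B).1 k - (Qc1e b τ u B).1 k,
   fun k i => (Q1e b τ u B).2 k i - (Qc1e b τ u B).2 k i)

/-- the filtered operator `𝒬₂^ε(A,B)` (with `τ = t/ε`). -/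
def Q2e (b : Fin d → ℝ) (κ τ : ℝ) (A B : PairF d) : PairF d :=
  Lgrp b (-τ)
    ((fun m => (1/2 : ℂ) * divC b (fun k i =>
        mulC b (Lgrp b τ A).1 (fun k' => (Lgrp b τ B).2 k' i) k
        + mulC b (fun k' => (Lgrp b τ A).2 k' i) (Lgrp b τ B).1 k) m),
     (fun m i => (1/2 : ℂ) * (gradC b (dotC b (Lgrp b τ A).2 (Lgrp b τ B).2) m i
        + (κ : ℂ) * gradC b (mulC b (Lgrp b τ A).1 (Lgrp b τ B).1) m i)))

/-- the resonant limit `𝒬₁(v,A)` of `𝒬₁^ε`. -/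
def Q1res (b : Fin d → ℝ) (v : VF d) (A : PairF d) : PairF d :=
  fromEig b (fun γ m =>
    if m = 0 then 0 else
      (Complex.I / ((Real.sqrt (vol b) : ℝ) : ℂ)) *
        ∑' k : Lat d, ∑ α : Bool,
          (if k ≠ 0 ∧
              (if α then (1:ℝ) else -1) * sg k * freqNorm b k = γ * sg m * freqNorm b m then
            eig b A (if α then (1:ℝ) else -1) k *
              (∑ i, (freq b k i : ℂ) * v (m - k) i) *
              (((∑ i, freq b k i * freq b m i) / (freqNorm b k * freqNorm b m) : ℝ) : ℂ)
          else 0))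

/-- the resonant limit `𝒬₂(A,B)` of `𝒬₂^ε`. -/
def Q2res (b : Fin d → ℝ) (κ : ℝ) (A B : PairF d) : PairF d :=
  fromEig b (fun γ m =>
    if m = 0 then 0 else
      (-Complex.I) * (((Real.sqrt (2 * vol b))⁻¹ : ℝ) : ℂ) * (((κ + 3) / 4 : ℝ) : ℂ) *
        ((γ * sg m * freqNorm b m : ℝ) : ℂ) *
        ∑' k : Lat d,
          (if k ≠ 0 ∧ m - k ≠ 0 ∧
              sg k * freqNorm b k + sg (m - k) * freqNorm b (m - k)
                = γ * sg m * freqNorm b m then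
            eig b A γ k * eig b B γ (m - k)
          else 0))

/-- pair of coefficient functions, seen as a single `(d+1)`-component field. -/
def pairC (A : PairF d) : Lat d → ℂ × (Fin d → ℂ) := fun k => (A.1 k, A.2 k)

/-- time-dependent version of `pairC`. -/
def pairT (V : ℝ → PairF d) : ℝ → Lat d → ℂ × (Fin d → ℂ) := fun t => pairC (V t)

/-- the difference of two time-dependent pairs, as a `(d+1)`-component field. -/
def pdiffT (A B : ℝ → PairF d) : ℝ → Lat d → ℂ × (Fin d → ℂ) :=
  fun t k => ((A t).1 k - (B t).1 k, fun i => (A t).2 k i - (B t).2 k i)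

/-! ### The systems -/

/-- `F = -div(aᵉ uᵉ)`, the right-hand side of the mass equation. -/
def Ffield (b : Fin d → ℝ) (a : ℝ → SF d) (u : ℝ → VF d) : ℝ → SF d :=
  fun t k => -(divC b (smulV b (a t) (u t)) k)

/-- `G = -κ a∇a - K̃(εa) a∇a - I(εa)𝒜u + f`, the nonlinear right-hand side of the
momentum equation. -/
def Gfield (b : Fin d → ℝ) (μ lam κ : ℝ) (Kt : ℝ → ℝ) (ε : ℝ) (f : ℝ → VF d)
    (a : ℝ → SF d) (u : ℝ → VF d) : ℝ → VF d :=
  fun t k i =>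
    -(κ : ℂ) * smulV b (a t) (gradC b (a t)) k i
    - smulV b (compC b (fun y => Kt (ε * y)) (a t)) (smulV b (a t) (gradC b (a t))) k i
    - smulV b (compC b (fun y => (ε * y) / (1 + ε * y)) (a t)) (AOp b μ lam (u t)) k i
    + f t k i

/-- the compressible system (CNS_ε), written on Fourier coefficients:
`∂ₜa + ε⁻¹ div u = -div(au)`,
`∂ₜu + u·∇u - 𝒜u + ε⁻¹∇a = -κa∇a - K̃(εa)a∇a - I(εa)𝒜u + f`. -/
def IsCNS (b : Fin d → ℝ) (μ lam κ : ℝ) (Kt : ℝ → ℝ) (ε : ℝ) (T : ℝ≥0∞)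
    (f : ℝ → VF d) (a₀ : SF d) (u₀ : VF d) (a : ℝ → SF d) (u : ℝ → VF d) : Prop :=
  a 0 = a₀ ∧ u 0 = u₀ ∧
  (∀ t ∈ timeSet T, ∀ k, HasDerivAt (fun s => a s k)
      (-((ε⁻¹ : ℝ) : ℂ) * divC b (u t) k + Ffield b a u t k) t) ∧
  (∀ t ∈ timeSet T, ∀ k, ∀ i, HasDerivAt (fun s => u s k i)
      (-(dotGrad b (u t) (u t) k i) + AOp b μ lam (u t) k i
        - ((ε⁻¹ : ℝ) : ℂ) * gradC b (a t) k i + Gfield b μ lam κ Kt ε f a u t k i) t)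

/-- the incompressible Navier–Stokes system (INS):
`∂ₜv - μΔv + v·∇v + ∇π = h`, `div v = 0`. -/
def IsINS (b : Fin d → ℝ) (μ : ℝ) (T : ℝ≥0∞) (h : ℝ → VF d) (v₀ : VF d)
    (v : ℝ → VF d) : Prop :=
  v 0 = v₀ ∧ (∀ t ∈ timeSet T, ∀ k, divC b (v t) k = 0) ∧
  ∃ pr : ℝ → SF d, ∀ t ∈ timeSet T, ∀ k, ∀ i,
    HasDerivAt (fun s => v s k i)
      ((μ : ℂ) * lapV b (v t) k i - dotGrad b (v t) (v t) k i
        - gradC b (pr t) k i + h t k i) t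

/-- the limit system (LS): `∂ₜV + 𝒬₁(v,V) + 𝒬₂(V,V) - (ν/2)ΔV = 0`. -/
def IsLS (b : Fin d → ℝ) (ν κ : ℝ) (T : ℝ≥0∞) (v : ℝ → VF d) (V₀ : PairF d)
    (V : ℝ → PairF d) : Prop :=
  V 0 = V₀ ∧
  (∀ t ∈ timeSet T, ∀ k, HasDerivAt (fun s => (V s).1 k)
      (-(Q1res b (v t) (V t)).1 k - (Q2res b κ (V t) (V t)).1 k
        + ((ν/2 : ℝ) : ℂ) * lapS b (V t).1 k) t) ∧
  (∀ t ∈ timeSet T, ∀ k, ∀ i, HasDerivAt (fun s => (V s).2 k i)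
      (-(Q1res b (v t) (V t)).2 k i - (Q2res b κ (V t) (V t)).2 k i
        + ((ν/2 : ℝ) : ℂ) * lapV b (V t).2 k i) t)

/-! ### Solution classes -/

/-- `(a,u) ∈ C̃_T(B̲^{d/2}_{2,1}) × (C̃_T(B^{d/2-1}_{2,1}) ∩ L¹_T(B̲^{d/2+1}_{2,1}))^d`. -/
def CNSClass (φ : ℝ → ℝ) (b : Fin d → ℝ) (T : ℝ≥0∞)
    (a : ℝ → SF d) (u : ℝ → VF d) : Prop :=
  (∀ t ∈ ctimeSet T, a t 0 = 0) ∧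
  ContB T (besovN φ b ((d:ℝ)/2) 1) a ∧ CL φ b ∞ T ((d:ℝ)/2) 1 a < ⊤ ∧
  ContB T (besovN φ b ((d:ℝ)/2 - 1) 1) u ∧ CL φ b ∞ T ((d:ℝ)/2 - 1) 1 u < ⊤ ∧
  LqB φ b 1 T ((d:ℝ)/2 + 1) 1 (fun t => ul (u t)) < ⊤

/-- `v ∈ (C̃_T(B^{d/2-1}_{2,1}) ∩ L¹_T(B̲^{d/2+1}_{2,1}))^d`. -/
def INSClass (φ : ℝ → ℝ) (b : Fin d → ℝ) (T : ℝ≥0∞) (v : ℝ → VF d) : Prop :=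
  ContB T (besovN φ b ((d:ℝ)/2 - 1) 1) v ∧ CL φ b ∞ T ((d:ℝ)/2 - 1) 1 v < ⊤ ∧
  LqB φ b 1 T ((d:ℝ)/2 + 1) 1 (fun t => ul (v t)) < ⊤

/-- `V ∈ (Ker L)^⊥ ∩ (C̃_T(B^{d/2-1}_{2,1}) ∩ L¹_T(B^{d/2+1}_{2,1}))^{d+1}`. -/
def LSClass (φ : ℝ → ℝ) (b : Fin d → ℝ) (T : ℝ≥0∞) (V : ℝ → PairF d) : Prop :=
  (∀ t ∈ ctimeSet T, memKerLp b (V t)) ∧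
  ContB T (besovN φ b ((d:ℝ)/2 - 1) 1) (pairT V) ∧
  CL φ b ∞ T ((d:ℝ)/2 - 1) 1 (pairT V) < ⊤ ∧
  LqB φ b 1 T ((d:ℝ)/2 + 1) 1 (pairT V) < ⊤

/-! ### The quantities of the energy framework -/

/-- `t ↦ ℚuᵉ(t)`. -/
def nQu (b : Fin d → ℝ) (u : ℝ → VF d) : ℝ → VF d := fun t => QC b (u t)

/-- `t ↦ ℙuᵉ(t)`. -/
def nPu (b : Fin d → ℝ) (u : ℝ → VF d) : ℝ → VF d := fun t => PC b (u t)

/-- `t ↦ (aᵉ(t), ℚuᵉ(t))` as a `(d+1)`-component field. -/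
def pairAQ (b : Fin d → ℝ) (a : ℝ → SF d) (u : ℝ → VF d) :
    ℝ → Lat d → ℂ × (Fin d → ℂ) :=
  fun t k => (a t k, QC b (u t) k)

/-- the filtered unknown `Vᵉ(t) = 𝓛(-t/ε)(aᵉ(t), ℚuᵉ(t))`. -/
def VepsT (b : Fin d → ℝ) (ε : ℝ) (a : ℝ → SF d) (u : ℝ → VF d) : ℝ → PairF d :=
  fun t => Lgrp b (-(t/ε)) (a t, QC b (u t))

/-- `t ↦ ℙuᵉ(t) - v(t)`. -/
def wdiffT (b : Fin d → ℝ) (u : ℝ → VF d) (v : ℝ → VF d) : ℝ → VF d :=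
  fun t k i => PC b (u t) k i - v t k i

/-- the quantity `X^ε(T)`. -/
def XeQ (φ : ℝ → ℝ) (b : Fin d → ℝ) (η₀ ε : ℝ) (T : ℝ≥0∞)
    (a : ℝ → SF d) (u : ℝ → VF d) : ℝ≥0∞ :=
  ENNReal.ofReal ε * CLH φ b (η₀/ε) ∞ T ((d:ℝ)/2) 1 a
  + (ENNReal.ofReal ε)⁻¹ * LqBH φ b (η₀/ε) 1 T ((d:ℝ)/2) 1 a
  + (CLL φ b (η₀/ε) ∞ T ((d:ℝ)/2 - 1) 1 a + LqBL φ b (η₀/ε) 1 T ((d:ℝ)/2 + 1) 1 a)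
  + (CL φ b ∞ T ((d:ℝ)/2 - 1) 1 (nQu b u) + LqB φ b 1 T ((d:ℝ)/2 + 1) 1 (nQu b u))

/-- the quantity `P^ε(T)` (and `P` if applied to `v`). -/
def PeQ (φ : ℝ → ℝ) (b : Fin d → ℝ) (T : ℝ≥0∞) (w : ℝ → VF d) : ℝ≥0∞ :=
  CL φ b ∞ T ((d:ℝ)/2 - 1) 1 w + LqB φ b 1 T ((d:ℝ)/2 + 1) 1 (fun t => ul (w t))

/-- the quantity `[aᵉ,uᵉ]^{ζ,ε}_{h,m}(T)`. -/
def BhmQ (φ : ℝ → ℝ) (b : Fin d → ℝ) (η₀ ζ ε : ℝ) (T : ℝ≥0∞)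
    (a : ℝ → SF d) (u : ℝ → VF d) : ℝ≥0∞ :=
  ENNReal.ofReal ε * CL φ b ∞ T ((d:ℝ)/2) 1 a
  + ENNReal.ofReal ε * CLH φ b (η₀/ε) ∞ T ((d:ℝ)/2) 1 a
  + (ENNReal.ofReal ε)⁻¹ * LqBH φ b (η₀/ε) 1 T ((d:ℝ)/2) 1 a
  + (CLH φ b (η₀/ε) ∞ T ((d:ℝ)/2 - 1) 1 (nQu b u)
      + LqBH φ b (η₀/ε) 1 T ((d:ℝ)/2 + 1) 1 (nQu b u))
  + (CLM φ b ζ (η₀/ε) ∞ T ((d:ℝ)/2 - 1) 1 (pairAQ b a u)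
      + LqBM φ b ζ (η₀/ε) 1 T ((d:ℝ)/2 + 1) 1 (pairAQ b a u))
  + (CLH φ b ζ ∞ T ((d:ℝ)/2 - 1) 1 (nPu b u) + LqBH φ b ζ 1 T ((d:ℝ)/2 + 1) 1 (nPu b u))

/-- the quantity `[W,u]^{ζ,ε}_l(T)`. -/
def BlQ (φ : ℝ → ℝ) (b : Fin d → ℝ) {E : Type*} [NormedAddCommGroup E] [NormedSpace ℝ E]
    (ζ : ℝ) (T : ℝ≥0∞) (W : ℝ → Lat d → E) (w : ℝ → VF d) : ℝ≥0∞ :=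
  (CLL φ b ζ ∞ T ((d:ℝ)/2 - 1) 1 W + CLL φ b ζ 2 T ((d:ℝ)/2) 1 W)
  + (CLL φ b ζ ∞ T ((d:ℝ)/2 - 1) 1 w + LqBL φ b ζ 1 T ((d:ℝ)/2 + 1) 1 (fun t => ul (w t)))

/-- the quantity `Y^{ζ,ε}(T)`. -/
def YQ (φ : ℝ → ℝ) (b : Fin d → ℝ) (η₀ ζ ε : ℝ) (T : ℝ≥0∞)
    (a : ℝ → SF d) (u : ℝ → VF d) : ℝ≥0∞ :=
  BhmQ φ b η₀ ζ ε T a u + BlQ φ b ζ T (pairAQ b a u) (nPu b u)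

/-- the quantity `D^{ζ,ε}(T)`. -/
def DQ (φ : ℝ → ℝ) (b : Fin d → ℝ) (η₀ ζ ε : ℝ) (T : ℝ≥0∞)
    (a : ℝ → SF d) (u : ℝ → VF d) (V : ℝ → PairF d) (v : ℝ → VF d) : ℝ≥0∞ :=
  BhmQ φ b η₀ ζ ε T a u + BlQ φ b ζ T (pdiffT (VepsT b ε a u) V) (wdiffT b u v)

/-- the quantity `Z^ε_θ(T) = ‖Vᵉ-V‖_{L̃^∞_T(H^{d/2-1-θ}) ∩ L²_T(H^{d/2-θ})}`. -/
def ZQ (φ : ℝ → ℝ) (b : Fin d → ℝ) (θ : ℝ) (T : ℝ≥0∞) (ε : ℝ)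
    (a : ℝ → SF d) (u : ℝ → VF d) (V : ℝ → PairF d) : ℝ≥0∞ :=
  CL φ b ∞ T ((d:ℝ)/2 - 1 - θ) 2 (pdiffT (VepsT b ε a u) V)
  + timeLq 2 T (fun t => hsN b ((d:ℝ)/2 - θ) (pdiffT (VepsT b ε a u) V t))

/-- the quantity `W^ε_θ(T) = ‖ℙuᵉ-v‖_{L̃^∞_T(B^{d/2-1-θ}_{2,1}) ∩ L¹_T(B̲^{d/2+1-θ}_{2,1})}`. -/
def WQ (φ : ℝ → ℝ) (b : Fin d → ℝ) (θ : ℝ) (T : ℝ≥0∞)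
    (u : ℝ → VF d) (v : ℝ → VF d) : ℝ≥0∞ :=
  CL φ b ∞ T ((d:ℝ)/2 - 1 - θ) 1 (wdiffT b u v)
  + LqB φ b 1 T ((d:ℝ)/2 + 1 - θ) 1 (fun t => ul (wdiffT b u v t))

/-- the quantity `X = ‖V‖_{L̃^∞_{T₀}(B^{d/2-1}_{2,1}) ∩ L¹_{T₀}(B^{d/2+1}_{2,1})}`. -/
def XQ (φ : ℝ → ℝ) (b : Fin d → ℝ) (T₀ : ℝ≥0∞) (V : ℝ → PairF d) : ℝ≥0∞ :=
  CL φ b ∞ T₀ ((d:ℝ)/2 - 1) 1 (pairT V) + LqB φ b 1 T₀ ((d:ℝ)/2 + 1) 1 (pairT V)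

/-- the quantity `X₀`. -/
def X0Q (φ : ℝ → ℝ) (b : Fin d → ℝ) (η₀ ε : ℝ) (a₀ : SF d) (u₀ : VF d) : ℝ≥0∞ :=
  besovL φ b (η₀/ε) ((d:ℝ)/2 - 1) 1 a₀
  + ENNReal.ofReal ε * besovH φ b (η₀/ε) ((d:ℝ)/2) 1 a₀
  + besovN φ b ((d:ℝ)/2 - 1) 1 (QC b u₀)

/-- the quantity `P₀`. -/
def P0Q (φ : ℝ → ℝ) (b : Fin d → ℝ) (u₀ : VF d) : ℝ≥0∞ :=
  besovN φ b ((d:ℝ)/2 - 1) 1 (PC b u₀)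

/-- the quantity `ℚ_f`, where `fQ'` is the time derivative of `ℚf`. -/
def QfQ (φ : ℝ → ℝ) (b : Fin d → ℝ) (T₀ : ℝ≥0∞) (S : ℝ) (f fQ' : ℝ → VF d) : ℝ≥0∞ :=
  LqB φ b 1 T₀ ((d:ℝ)/2 - 1) 1 (fun t => QC b (f t))
  + LqHs b ∞ T₀ (-S) (fun t => QC b (f t))
  + LqHs b 1 T₀ (-S) fQ'

/-- the quantity `ℚ_f(0) = ‖ℚf(0)‖_{H^{-S}}`. -/
def Qf0Q (b : Fin d → ℝ) (S : ℝ) (f : ℝ → VF d) : ℝ≥0∞ := hsN b (-S) (QC b (f 0))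

/-- the quantity `ℙ_f`. -/
def PfQ (φ : ℝ → ℝ) (b : Fin d → ℝ) (T₀ : ℝ≥0∞) (f : ℝ → VF d) : ℝ≥0∞ :=
  LqB φ b 1 T₀ ((d:ℝ)/2 - 1) 1 (fun t => PC b (f t))

/-!
In `𝒬₂` the resonance `±|k| ± |l| = ±|k + l|` is the equality case of the Cauchy–Schwarz inequality,
so interacting frequencies are collinear. A line through the origin carries only `O(2^q)` lattice
points of size `2^q`, so the convolution of two dyadic blocks behaves as in one dimension: counting
along the shortest of the three scales `i`, `j`, `q` gains `2^{min(i, j, q)/2}` in `L²`, and the sum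
over the output scale `q` converges exactly when the regularity exceeds `-1/2`.

In `𝒬₁` the resonance forces `|k| = |m|`, so the derivative can be moved freely between input and
output, and `|m - k| ≤ 2|k|` trades the weight `|m - k|^{-γ}` on `u` for `γ` derivatives of `A`;
what remains is Young's inequality `ℓ¹ * ℓ² ⊆ ℓ²`, with the mean of `u` treated separately.
-/

section SequenceNorms

variable {α ι : Type*}

lemma lr_mono (r : ℝ≥0∞) {f g : α → ℝ≥0∞} (h : ∀ a, f a ≤ g a) : lr r f ≤ lr r g := by
  unfold lr
  split_ifs
  · exact iSup_mono h
  · gcongr with a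
    exact h a

lemma lr_comp_equiv {β : Type*} (r : ℝ≥0∞) (e : β ≃ α) (f : α → ℝ≥0∞) :
    lr r (fun x => f (e x)) = lr r f := by
  unfold lr
  rw [e.iSup_comp (g := f), e.tsum_eq (fun a => f a ^ r.toReal)]

lemma lr_const_mul {r : ℝ≥0∞} (hr : r ≠ 0) (c : ℝ≥0∞) (f : α → ℝ≥0∞) :
    lr r (fun a => c * f a) = c * lr r f := by
  unfold lr
  split_ifs with htop
  · exact (ENNReal.mul_iSup c f).symm
  · have hpos : 0 < r.toReal := ENNReal.toReal_pos hr htop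
    simp only [ENNReal.mul_rpow_of_nonneg _ _ hpos.le, ENNReal.tsum_mul_left]
    rw [ENNReal.mul_rpow_of_nonneg _ _ (by positivity), one_div, ENNReal.rpow_rpow_inv hpos.ne']

lemma lr_one_option (f : Option α → ℝ≥0∞) : lr 1 f = f none + ∑' a, f (some a) := by
  simp only [lr, ENNReal.one_ne_top, if_false, ENNReal.toReal_one, ENNReal.rpow_one, div_one]
  rw [← (Equiv.optionEquivSumPUnit.{0} α).symm.tsum_eq, ENNReal.summable.tsum_sum ENNReal.summable]
  simp [add_comm]

lemma lr_two_eq (f : α → ℝ≥0∞) : lr 2 f = (∑' a, f a ^ 2) ^ (1 / 2 : ℝ) := by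
  simp [lr]

lemma rpow_half_sq (x : ℝ≥0∞) : (x ^ (1 / 2 : ℝ)) ^ 2 = x := by
  rw [← ENNReal.rpow_natCast, ← ENNReal.rpow_mul]
  norm_num

lemma lr_two_sq (f : α → ℝ≥0∞) : lr 2 f ^ 2 = ∑' a, f a ^ 2 := by
  rw [lr_two_eq, rpow_half_sq]

lemma lr_two_le_iff {f : α → ℝ≥0∞} {X : ℝ≥0∞} : lr 2 f ≤ X ↔ ∑' a, f a ^ 2 ≤ X ^ 2 := by
  rw [← lr_two_sq, ENNReal.pow_le_pow_left_iff two_ne_zero]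

lemma tsum_mul_le_lr_two_mul_lr_two (f g : α → ℝ≥0∞) : ∑' a, f a * g a ≤ lr 2 f * lr 2 g := by
  let _ : MeasurableSpace α := ⊤
  have holder := ENNReal.lintegral_mul_le_Lp_mul_Lq (Measure.count : Measure α)
    Real.HolderConjugate.two_two (measurable_from_top (f := f)).aemeasurable
    (measurable_from_top (f := g)).aemeasurable
  simp only [lintegral_count' measurable_from_top] at holder
  simpa [lr_two_eq] using holder

lemma sq_tsum_mul_le (f g : α → ℝ≥0∞) :
    (∑' a, f a * g a) ^ 2 ≤ (∑' a, f a ^ 2) * ∑' a, g a ^ 2 := by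
  rw [← lr_two_sq, ← lr_two_sq, ← mul_pow]
  gcongr
  exact tsum_mul_le_lr_two_mul_lr_two f g

lemma lr_two_tsum_le (f : ι → α → ℝ≥0∞) : lr 2 (fun a => ∑' i, f i a) ≤ ∑' i, lr 2 (f i) := by
  refine lr_two_le_iff.2 ?_
  calc ∑' a, (∑' i, f i a) ^ 2 = ∑' i, ∑' j, ∑' a, f i a * f j a := by
        simp_rw [sq, ← ENNReal.tsum_mul_right, ← ENNReal.tsum_mul_left]
        rw [ENNReal.tsum_comm]
        simp_rw [ENNReal.tsum_comm (α := α)]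
    _ ≤ ∑' i, ∑' j, lr 2 (f i) * lr 2 (f j) := by
        gcongr with i j
        exact tsum_mul_le_lr_two_mul_lr_two _ _
    _ = (∑' i, lr 2 (f i)) ^ 2 := by
        simp_rw [ENNReal.tsum_mul_left, ENNReal.tsum_mul_right, sq]

lemma lr_two_add_le (f g : α → ℝ≥0∞) : lr 2 (fun a => f a + g a) ≤ lr 2 f + lr 2 g := by
  simpa [tsum_bool, add_comm] using lr_two_tsum_le (fun i : Bool => if i then f else g)

lemma tsum_indicator_one_eq_encard (S : Set α) :
    ∑' a, S.indicator (fun _ => (1 : ℝ≥0∞)) a = (S.encard : ℝ≥0∞) := by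
  rw [← ENNReal.tsum_set_one, tsum_subtype S (fun _ => (1 : ℝ≥0∞))]

lemma sq_tsum_le_encard_mul {S : Set α} {f : α → ℝ≥0∞} (hf : f.support ⊆ S) :
    (∑' a, f a) ^ 2 ≤ S.encard * ∑' a, f a ^ 2 := by
  calc (∑' a, f a) ^ 2 = (∑' a, S.indicator (fun _ => 1) a * f a) ^ 2 := by
        congr 2 with a
        by_cases ha : a ∈ S
        · simp [ha]
        · simp [ha, Function.notMem_support.1 fun h => ha (hf h)]
    _ ≤ (∑' a, S.indicator (fun _ => 1) a ^ 2) * ∑' a, f a ^ 2 := sq_tsum_mul_le _ _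
    _ = S.encard * ∑' a, f a ^ 2 := by
        rw [← tsum_indicator_one_eq_encard]
        congr 3 with a
        by_cases ha : a ∈ S <;> simp [ha]

lemma eL2_eq_lr_two [NormedAddCommGroup E] (c : Lat d → E) :
    eL2 c = lr 2 (fun k => ‖c k‖ₑ) :=
  (lr_two_eq _).symm

end SequenceNorms

section RestrictedConvolution

variable {G ι κ : Type*} [AddCommGroup G]

lemma lr_two_conv_le (g f : G → ℝ≥0∞) :
    lr 2 (fun m => ∑' l, g l * f (m - l)) ≤ (∑' l, g l) * lr 2 f := by
  refine (lr_two_tsum_le (fun l m => g l * f (m - l))).trans_eq ?_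
  simp_rw [lr_const_mul two_ne_zero, ← ENNReal.tsum_mul_right]
  congr 1 with l
  rw [← lr_comp_equiv 2 (Equiv.subRight l) f]
  rfl

/-- The convolution of `f` and `g` restricted to the interactions `k + (m - k) = m` for which
the relation `R k m` holds; `R` stands for a resonance condition. -/
def restrictedConv (R : G → G → Prop) (f g : G → ℝ≥0∞) (m : G) : ℝ≥0∞ :=
  ∑' k, if R k m then f k * g (m - k) else 0

variable {R : G → G → Prop} {f g : G → ℝ≥0∞}

lemma restrictedConv_comm (hR : ∀ k m, R (m - k) m ↔ R k m) (f g : G → ℝ≥0∞) :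
    restrictedConv R f g = restrictedConv R g f := by
  ext m
  unfold restrictedConv
  rw [← (Equiv.subLeft m).tsum_eq]
  simp only [Equiv.subLeft_apply, sub_sub_cancel, hR, mul_comm]

lemma restrictedConv_tsum_tsum (R : G → G → Prop) (f : ι → G → ℝ≥0∞) (g : κ → G → ℝ≥0∞) (m : G) :
    restrictedConv R (fun k => ∑' i, f i k) (fun k => ∑' j, g j k) m =
      ∑' i, ∑' j, restrictedConv R (f i) (g j) m := by
  unfold restrictedConv
  simp_rw [ENNReal.tsum_comm (β := G)]
  congr 1 with k
  split_ifs
  · simp_rw [ENNReal.tsum_mul_left, ENNReal.tsum_mul_right]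
  · simp

lemma tsum_sq_mul_conv_sq (f g : G → ℝ≥0∞) :
    ∑' m, ∑' k, f k ^ 2 * g (m - k) ^ 2 = lr 2 f ^ 2 * lr 2 g ^ 2 := by
  rw [ENNReal.tsum_comm, lr_two_sq, ← ENNReal.tsum_mul_right]
  congr 1 with k
  rw [ENNReal.tsum_mul_left, lr_two_sq]
  congr 1
  exact (Equiv.subRight k).tsum_eq (fun l => g l ^ 2)

lemma lr_two_indicator_restrictedConv_le_of_fiber {S T : Set G} {N : ℝ≥0∞} (hf : f.support ⊆ S)
    (hN : ∀ m ∈ T, ({k ∈ S | R k m}.encard : ℝ≥0∞) ≤ N) :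
    lr 2 (T.indicator (restrictedConv R f g)) ≤ N ^ (1 / 2 : ℝ) * (lr 2 f * lr 2 g) := by
  rw [lr_two_le_iff, mul_pow, rpow_half_sq, mul_pow, ← tsum_sq_mul_conv_sq,
    ← ENNReal.tsum_mul_left]
  refine ENNReal.tsum_le_tsum fun m => ?_
  by_cases hm : m ∈ T
  swap
  · simp [hm]
  rw [indicator_of_mem hm]
  calc restrictedConv R f g m ^ 2
      ≤ {k ∈ S | R k m}.encard * ∑' k, (if R k m then f k * g (m - k) else 0) ^ 2 :=
        sq_tsum_le_encard_mul fun k hk => by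
          simp only [Function.mem_support, ne_eq, ite_eq_right_iff, mul_eq_zero, not_forall] at hk
          exact ⟨hf fun h => hk.2 (Or.inl h), hk.1⟩
    _ ≤ N * ∑' k, f k ^ 2 * g (m - k) ^ 2 := by
        gcongr with k
        · exact hN m hm
        · split_ifs
          · rw [mul_pow]
          · simp

lemma lr_two_indicator_restrictedConv_le_of_cofiber {S T : Set G} {N : ℝ≥0∞} (hf : f.support ⊆ S)
    (hN : ∀ k ∈ S, ({m ∈ T | R k m}.encard : ℝ≥0∞) ≤ N) :
    lr 2 (T.indicator (restrictedConv R f g)) ≤ N ^ (1 / 2 : ℝ) * (lr 2 f * lr 2 g) := by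
  rw [lr_two_le_iff, mul_pow, rpow_half_sq, mul_pow]
  calc ∑' m, T.indicator (restrictedConv R f g) m ^ 2
      ≤ ∑' m, (∑' k, {m ∈ T | R k m}.indicator (fun _ => 1) m * f k ^ 2) * lr 2 g ^ 2 := by
        gcongr with m
        by_cases hm : m ∈ T
        swap
        · simp [hm]
        calc T.indicator (restrictedConv R f g) m ^ 2
            = (∑' k, (if R k m then f k else 0) * g (m - k)) ^ 2 := by
              simp only [indicator_of_mem hm, restrictedConv, ite_mul, zero_mul]
          _ ≤ (∑' k, (if R k m then f k else 0) ^ 2) * ∑' k, g (m - k) ^ 2 := sq_tsum_mul_le _ _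
          _ = _ := by
              rw [lr_two_sq, ← (Equiv.subLeft m).tsum_eq (fun k => g k ^ 2)]
              congr 2 with k
              by_cases hR : R k m <;> simp [hR, hm]
    _ = (∑' k, {m ∈ T | R k m}.encard * f k ^ 2) * lr 2 g ^ 2 := by
        rw [ENNReal.tsum_mul_right, ENNReal.tsum_comm]
        simp_rw [ENNReal.tsum_mul_right, tsum_indicator_one_eq_encard]
    _ ≤ (∑' k, N * f k ^ 2) * lr 2 g ^ 2 := by
        refine mul_le_mul_left (ENNReal.tsum_le_tsum fun k => ?_) _
        by_cases hk : k ∈ S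
        · gcongr
          exact hN k hk
        · simp [Function.notMem_support.1 fun h => hk (hf h)]
    _ = N * (lr 2 f ^ 2 * lr 2 g ^ 2) := by
        rw [ENNReal.tsum_mul_left, lr_two_sq f, mul_assoc]

end RestrictedConvolution

section Frequencies

/-- The real frequency `(k_i / b_i)_i` of a lattice point, as an additive map into Euclidean space;
its norm is `freqNorm`. -/
def freqVec (b : Fin d → ℝ) : Lat d →+ EuclideanSpace ℝ (Fin d) where
  toFun k := WithLp.toLp 2 (freq b k)
  map_zero' := by ext i; simp [freq]
  map_add' k l := by ext i; simp [freq, add_div]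

variable (b : Fin d → ℝ)

lemma freqVec_apply (k : Lat d) (i : Fin d) : freqVec b k i = k i / b i := rfl

lemma freqNorm_eq_norm (k : Lat d) : freqNorm b k = ‖freqVec b k‖ := by
  rw [EuclideanSpace.norm_eq]
  simp [freqNorm, freqVec]

lemma freqNorm_nonneg (k : Lat d) : 0 ≤ freqNorm b k := Real.sqrt_nonneg _

lemma freqNorm_zero : freqNorm b (0 : Lat d) = 0 := by
  rw [freqNorm_eq_norm, map_zero, norm_zero]

lemma freqNorm_le_add_sub (k m : Lat d) :
    freqNorm b m ≤ freqNorm b k + freqNorm b (m - k) := by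
  simp only [freqNorm_eq_norm, map_sub]
  exact norm_le_norm_add_norm_sub' _ _

lemma freqNorm_sub_le (k l : Lat d) : freqNorm b (k - l) ≤ freqNorm b k + freqNorm b l := by
  simp only [freqNorm_eq_norm, map_sub]
  exact norm_sub_le _ _

lemma abs_freq_le_freqNorm (k : Lat d) (i : Fin d) : |freq b k i| ≤ freqNorm b k := by
  rw [freqNorm_eq_norm]
  exact PiLp.norm_apply_le (freqVec b k) i

lemma abs_freq_div_freqNorm_le_one (k : Lat d) (i : Fin d) :
    |freq b k i / freqNorm b k| ≤ 1 := by
  rw [abs_div, abs_of_nonneg (freqNorm_nonneg b k)]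
  exact div_le_one_of_le₀ (abs_freq_le_freqNorm b k i) (freqNorm_nonneg b k)

variable {b}

lemma abs_coord_le_mul_freqNorm (hb : ∀ i, 0 < b i) (k : Lat d) (i : Fin d) :
    |(k i : ℝ)| ≤ b i * freqNorm b k := by
  have h := abs_freq_le_freqNorm b k i
  rwa [freq, abs_div, abs_of_pos (hb i), div_le_iff₀' (hb i)] at h

lemma one_le_sum_mul_freqNorm (hb : ∀ i, 0 < b i) {k : Lat d} (hk : k ≠ 0) :
    1 ≤ (∑ i, b i) * freqNorm b k := by
  obtain ⟨i, hi⟩ := Function.ne_iff.1 hk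
  calc (1 : ℝ) ≤ |(k i : ℝ)| := by exact_mod_cast Int.one_le_abs hi
    _ ≤ b i * freqNorm b k := abs_coord_le_mul_freqNorm hb k i
    _ ≤ (∑ i, b i) * freqNorm b k := by
        gcongr
        · exact freqNorm_nonneg b k
        · exact Finset.single_le_sum (fun j _ => (hb j).le) (Finset.mem_univ i)

lemma freqNorm_pos (hb : ∀ i, 0 < b i) {k : Lat d} (hk : k ≠ 0) : 0 < freqNorm b k := by
  refine (freqNorm_nonneg b k).lt_of_ne' fun h => ?_
  have := one_le_sum_mul_freqNorm hb hk
  norm_num [h] at this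

lemma abs_sg (k : Lat d) : |sg k| = 1 := by
  unfold sg
  split_ifs <;> norm_num

/-- `k` and `m` lie on a common line through the origin (all `2 × 2` minors vanish). -/
def IsParallel (k m : Lat d) : Prop := ∀ i j, k i * m j = k j * m i

lemma isParallel_comm {k m : Lat d} : IsParallel k m ↔ IsParallel m k := by
  unfold IsParallel
  rw [forall_comm]
  simp only [mul_comm, eq_comm]

lemma isParallel_sub_left_iff {k m : Lat d} : IsParallel (m - k) m ↔ IsParallel k m :=
  forall₂_congr fun i j => by
    simp only [Pi.sub_apply, sub_mul, mul_comm (m j) (m i), sub_right_inj]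

lemma isParallel_sub_right_iff {k m : Lat d} : IsParallel k (m - k) ↔ IsParallel k m :=
  forall₂_congr fun i j => by
    simp only [Pi.sub_apply, mul_sub, mul_comm (k j) (k i), sub_left_inj]

lemma norm_inner_eq_of_signed_norm_add_eq {V : Type*} [NormedAddCommGroup V]
    [InnerProductSpace ℝ V] {x y : V} {ε₁ ε₂ ε₃ : ℝ} (h₁ : |ε₁| = 1) (h₂ : |ε₂| = 1)
    (h₃ : |ε₃| = 1) (h : ε₁ * ‖x‖ + ε₂ * ‖y‖ = ε₃ * ‖x + y‖) :
    ‖inner ℝ x y‖ = ‖x‖ * ‖y‖ := by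
  have expand : inner ℝ x y = ε₁ * ‖x‖ * (ε₂ * ‖y‖) := by
    have hsq := congrArg (· ^ 2) h
    simp only [add_sq, mul_pow, ← sq_abs ε₁, ← sq_abs ε₂, ← sq_abs ε₃, h₁, h₂, h₃,
      norm_add_sq_real] at hsq
    linarith
  rw [expand, Real.norm_eq_abs]
  simp only [abs_mul, h₁, h₂, abs_norm, one_mul]

lemma isParallel_of_norm_inner_eq (hb : ∀ i, 0 < b i) {k l : Lat d}
    (h : ‖inner ℝ (freqVec b k) (freqVec b l)‖ = ‖freqVec b k‖ * ‖freqVec b l‖) :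
    IsParallel k l := by
  intro i j
  rcases ((norm_inner_eq_norm_tfae ℝ (freqVec b k) (freqVec b l)).out 0 2).1 h with h₀ | ⟨r, hr⟩
  · have hk : k = 0 := by
      by_contra hk
      exact (freqNorm_pos hb hk).ne' (by rw [freqNorm_eq_norm, h₀, norm_zero])
    simp [hk]
  · have coord : ∀ i, (l i : ℝ) = r * k i := fun i => by
      have := congrArg (· i) hr
      simp only [PiLp.smul_apply, freqVec_apply, smul_eq_mul] at this
      have := (hb i).ne'
      field_simp at *
      assumption
    have : (k i : ℝ) * l j = k j * l i := by rw [coord, coord]; ring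
    exact_mod_cast this

lemma isParallel_of_resonance (hb : ∀ i, 0 < b i) {k m : Lat d} {γ : ℝ} (hγ : |γ| = 1)
    (h : sg k * freqNorm b k + sg (m - k) * freqNorm b (m - k) = γ * sg m * freqNorm b m) :
    IsParallel k m := by
  refine isParallel_sub_right_iff.1 (isParallel_of_norm_inner_eq hb
    (norm_inner_eq_of_signed_norm_add_eq (abs_sg k) (abs_sg (m - k)) (ε₃ := γ * sg m)
      (by rw [abs_mul, hγ, abs_sg, one_mul]) ?_))
  rw [← map_add, add_sub_cancel]
  simpa only [freqNorm_eq_norm] using h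

lemma injOn_eval_isParallel {m : Lat d} {i : Fin d} (hi : m i ≠ 0) :
    InjOn (fun k : Lat d => k i) {k | IsParallel k m} := by
  intro k hk l hl hkl
  ext j
  refine mul_right_cancel₀ hi ?_
  rw [← hk i j, ← hl i j]
  exact congrArg (· * m j) hkl

lemma encard_isParallel_le (hb : ∀ i, 0 < b i) {m : Lat d} (hm : m ≠ 0) {R : ℝ} (hR : 0 ≤ R) :
    ({k | k ≠ 0 ∧ IsParallel k m ∧ freqNorm b k ≤ R}.encard : ℝ≥0∞) ≤
      ENNReal.ofReal (2 * (∑ i, b i) * R) := by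
  obtain ⟨i, hi⟩ := Function.ne_iff.1 hm
  set n := ⌊b i * R⌋
  have hn : 0 ≤ n := Int.floor_nonneg.2 (mul_nonneg (hb i).le hR)
  set I : Finset ℤ := (Finset.Icc (-n) n).erase 0
  have hinj := injOn_eval_isParallel hi
  have hmaps : MapsTo (fun k : Lat d => k i)
      {k | k ≠ 0 ∧ IsParallel k m ∧ freqNorm b k ≤ R} I := by
    rintro k ⟨hk, hkm, hkR⟩
    have hkn : |k i| ≤ n := Int.le_floor.2 <| by
      push_cast
      exact (abs_coord_le_mul_freqNorm hb k i).trans (by gcongr; exact (hb i).le)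
    have hki : k i ≠ 0 := fun h => hk (hinj hkm (fun _ _ => by simp) h)
    simpa [I, hki] using abs_le.1 hkn
  have hcard : (I.card : ℝ) ≤ 2 * (∑ i, b i) * R := by
    have hI : (I.card : ℤ) = 2 * n := by
      rw [Finset.card_erase_of_mem (by simp [hn]), Int.card_Icc]
      omega
    calc (I.card : ℝ) = 2 * n := by exact_mod_cast hI
      _ ≤ 2 * (b i * R) := by gcongr; exact Int.floor_le _
      _ ≤ 2 * (∑ i, b i) * R := by
        rw [mul_assoc]
        gcongr
        exact Finset.single_le_sum (fun j _ => (hb j).le) (Finset.mem_univ i)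
  calc (({k | k ≠ 0 ∧ IsParallel k m ∧ freqNorm b k ≤ R}.encard : ℕ∞) : ℝ≥0∞)
      ≤ ((I.card : ℕ∞) : ℝ≥0∞) := by
        rw [← encard_coe_eq_coe_finsetCard]
        exact_mod_cast encard_le_encard_of_injOn hmaps (hinj.mono fun k hk => hk.2.1)
    _ = ENNReal.ofReal I.card := by simp
    _ ≤ _ := ENNReal.ofReal_le_ofReal hcard

end Frequencies

section PowersOfTwo

lemma two_rpow_add (x y : ℝ) : (2 : ℝ≥0∞) ^ (x + y) = 2 ^ x * 2 ^ y :=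
  ENNReal.rpow_add _ _ two_ne_zero ENNReal.ofNat_ne_top

lemma two_rpow_le_two_rpow {x y : ℝ} (h : x ≤ y) : (2 : ℝ≥0∞) ^ x ≤ 2 ^ y :=
  ENNReal.rpow_le_rpow_of_exponent_le one_le_two h

lemma two_rpow_lt_top (x : ℝ) : (2 : ℝ≥0∞) ^ x < ⊤ :=
  (ENNReal.rpow_ne_top_of_ne_zero two_ne_zero ENNReal.ofNat_ne_top).lt_top

lemma ofReal_two_zpow (q : ℤ) : ENNReal.ofReal ((2 : ℝ) ^ q) = 2 ^ (q : ℝ) := by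
  rw [← Real.rpow_intCast, ← ENNReal.ofReal_rpow_of_pos two_pos, ENNReal.ofReal_ofNat]

/-- Geometric weight of an interaction whose output scale exceeds its largest input scale by `n`;
frequency localisation rules out `n > 2`. -/
def outputWeight (δ : ℝ) (n : ℤ) : ℝ≥0∞ := if n ≤ 2 then 2 ^ (n * δ) else 0

lemma tsum_outputWeight_lt_top {δ : ℝ} (hδ : 0 < δ) : ∑' n, outputWeight δ n < ⊤ := by
  have hsupp : Function.support (fun t : ℤ => outputWeight δ (2 - t)) ⊆
      range ((↑) : ℕ → ℤ) := fun t ht => by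
    have : 2 - t ≤ 2 := by
      by_contra h
      exact ht (if_neg h)
    exact ⟨t.toNat, by omega⟩
  have hterm (n : ℕ) : outputWeight δ (2 - n) = 2 ^ (2 * δ) * (2 ^ (-δ)) ^ n := by
    rw [outputWeight, if_pos (by omega), ← ENNReal.rpow_natCast, ← ENNReal.rpow_mul,
      ← two_rpow_add]
    congr 1
    push_cast
    ring
  have hratio : (2 : ℝ≥0∞) ^ (-δ) < 1 :=
    ENNReal.rpow_lt_one_of_one_lt_of_neg ENNReal.one_lt_two (neg_neg_of_pos hδ)
  calc ∑' n, outputWeight δ n = ∑' t : ℤ, outputWeight δ (2 - t) :=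
        ((Equiv.subLeft (2 : ℤ)).tsum_eq _).symm
    _ = 2 ^ (2 * δ) * (1 - 2 ^ (-δ))⁻¹ := by
        rw [← Nat.cast_injective.tsum_eq hsupp]
        simp_rw [hterm, ENNReal.tsum_mul_left, ENNReal.tsum_geometric]
    _ < ⊤ := ENNReal.mul_lt_top (two_rpow_lt_top _)
        (ENNReal.inv_lt_top.2 (tsub_pos_iff_lt.2 hratio))

end PowersOfTwo

section CollinearConvolution

/-- The lattice points whose frequency lies in the annulus `3/4 · 2^q ≤ |ξ| ≤ 8/3 · 2^q`, which
carries the `q`-th Littlewood–Paley block. -/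
def dyadicAnnulus (b : Fin d → ℝ) (q : ℤ) : Set (Lat d) :=
  {k | 3 / 4 * (2 : ℝ) ^ q ≤ freqNorm b k ∧ freqNorm b k ≤ 8 / 3 * (2 : ℝ) ^ q}

/-- Square root of the density of lattice points on a line: a line through the origin has at most
`lineConst b ^ 2 * 2 ^ q` nonzero points of frequency `≤ 8/3 · 2^q`. -/
def lineConst (b : Fin d → ℝ) : ℝ≥0∞ := ENNReal.ofReal (16 / 3 * ∑ i, b i) ^ (1 / 2 : ℝ)

/-- Constant of the dyadic bilinear estimate for collinear interactions at regularity `s`; it is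
finite for `s > -1/2`. -/
def collinearConst (b : Fin d → ℝ) (s : ℝ) : ℝ≥0∞ :=
  2 * lineConst b * ∑' n, outputWeight (s + 1 / 2) n

/-- The bilinear expression `∑ᵢⱼ 2^{max(i,j) s} 2^{min(i,j)/2} αᵢ βⱼ` in dyadic sequences: the
high frequency carries `s` derivatives, the low one the half derivative of a one-dimensional
Bernstein inequality. -/
def dyadicPairing (s : ℝ) (α β : ℤ → ℝ≥0∞) : ℝ≥0∞ :=
  ∑' i, ∑' j, 2 ^ (((max i j : ℤ) : ℝ) * s + ((min i j : ℤ) : ℝ) * (1 / 2)) * (α i * β j)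

variable {b : Fin d → ℝ} {i j q : ℤ} {f g : Lat d → ℝ≥0∞}

lemma ne_zero_of_mem_dyadicAnnulus {k : Lat d} (hk : k ∈ dyadicAnnulus b q) : k ≠ 0 := by
  rintro rfl
  have hpos : (0 : ℝ) < 3 / 4 * 2 ^ q := by positivity
  exact (hpos.trans_le hk.1).ne' (freqNorm_zero b)

lemma collinearConst_lt_top (b : Fin d → ℝ) {s : ℝ} (hs : -(1 / 2) < s) :
    collinearConst b s < ⊤ := by
  have hline : lineConst b < ⊤ := ENNReal.rpow_lt_top_of_nonneg (by norm_num) ENNReal.ofReal_ne_top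
  have hsum := tsum_outputWeight_lt_top (show 0 < s + 1 / 2 by linarith)
  exact ENNReal.mul_lt_top (ENNReal.mul_lt_top ENNReal.ofNat_lt_top hline) hsum

lemma encard_dyadicAnnulus_isParallel_le (hb : ∀ i, 0 < b i) {m : Lat d} (hm : m ≠ 0) (q : ℤ) :
    ({k ∈ dyadicAnnulus b q | IsParallel k m}.encard : ℝ≥0∞) ≤
      ENNReal.ofReal (16 / 3 * ∑ i, b i) * 2 ^ (q : ℝ) := by
  calc ({k ∈ dyadicAnnulus b q | IsParallel k m}.encard : ℝ≥0∞)
      ≤ {k | k ≠ 0 ∧ IsParallel k m ∧ freqNorm b k ≤ 8 / 3 * 2 ^ q}.encard := by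
        refine mod_cast encard_le_encard fun k hk => ?_
        exact ⟨ne_zero_of_mem_dyadicAnnulus hk.1, hk.2, hk.1.2⟩
    _ ≤ ENNReal.ofReal (2 * (∑ i, b i) * (8 / 3 * 2 ^ q)) :=
        encard_isParallel_le hb hm (by positivity)
    _ = ENNReal.ofReal (16 / 3 * ∑ i, b i) * 2 ^ (q : ℝ) := by
        rw [← ofReal_two_zpow, ← ENNReal.ofReal_mul' (by positivity)]
        ring_nf

lemma collinear_block_le (hb : ∀ i, 0 < b i) (q : ℤ) (hf : f.support ⊆ dyadicAnnulus b i)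
    (hg : g.support ⊆ dyadicAnnulus b j) :
    lr 2 ((dyadicAnnulus b q).indicator (restrictedConv IsParallel f g)) ≤
      lineConst b * 2 ^ (((min (min i j) q : ℤ) : ℝ) * (1 / 2)) * (lr 2 f * lr 2 g) := by
  have hcount (x : ℤ) : lineConst b * 2 ^ ((x : ℝ) * (1 / 2)) =
      (ENNReal.ofReal (16 / 3 * ∑ i, b i) * 2 ^ (x : ℝ)) ^ (1 / 2 : ℝ) := by
    rw [ENNReal.mul_rpow_of_nonneg _ _ (by norm_num), ← ENNReal.rpow_mul, lineConst]
  rw [hcount]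
  rcases min_choice (min i j) q with hx | hx <;> rw [hx]
  · rcases min_choice i j with hx | hx <;> rw [hx]
    · exact lr_two_indicator_restrictedConv_le_of_fiber hf fun m hm =>
        encard_dyadicAnnulus_isParallel_le hb (ne_zero_of_mem_dyadicAnnulus hm) i
    · rw [restrictedConv_comm (fun _ _ => isParallel_sub_left_iff), mul_comm (lr 2 f)]
      exact lr_two_indicator_restrictedConv_le_of_fiber hg fun m hm =>
        encard_dyadicAnnulus_isParallel_le hb (ne_zero_of_mem_dyadicAnnulus hm) j
  · refine lr_two_indicator_restrictedConv_le_of_cofiber hf fun k hk => ?_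
    simp only [isParallel_comm (k := k)]
    exact encard_dyadicAnnulus_isParallel_le hb (ne_zero_of_mem_dyadicAnnulus hk) q

lemma scale_le_max_add_two {k l m : Lat d} (hm : m ∈ dyadicAnnulus b q)
    (hk : k ∈ dyadicAnnulus b i) (hl : l ∈ dyadicAnnulus b j)
    (h : freqNorm b m ≤ freqNorm b k + freqNorm b l) : q ≤ max i j + 2 := by
  by_contra! hq
  have hqM : (2 : ℝ) ^ 3 * 2 ^ max i j ≤ 2 ^ q := by
    rw [← zpow_natCast, ← zpow_add₀ two_ne_zero]
    exact zpow_le_zpow_right₀ one_le_two (by push_cast; omega)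
  have hiM : (2 : ℝ) ^ i ≤ 2 ^ max i j := zpow_le_zpow_right₀ one_le_two (le_max_left i j)
  have hjM : (2 : ℝ) ^ j ≤ 2 ^ max i j := zpow_le_zpow_right₀ one_le_two (le_max_right i j)
  have hM : (0 : ℝ) < 2 ^ max i j := by positivity
  linarith [hm.1, hk.2, hl.2]

lemma scales_of_restrictedConv_ne_zero {R : Lat d → Lat d → Prop} {m : Lat d}
    (hf : f.support ⊆ dyadicAnnulus b i) (hg : g.support ⊆ dyadicAnnulus b j)
    (hm : m ∈ dyadicAnnulus b q) (h : restrictedConv R f g m ≠ 0) :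
    q ≤ max i j + 2 ∧ i ≤ max q j + 2 ∧ j ≤ max q i + 2 := by
  obtain ⟨k, hk⟩ := not_forall.1 (mt ENNReal.tsum_eq_zero.2 h)
  have hfg : f k * g (m - k) ≠ 0 := fun h => hk (by simp [h])
  have hfk := hf (left_ne_zero_of_mul hfg)
  have hgl := hg (right_ne_zero_of_mul hfg)
  refine ⟨scale_le_max_add_two hm hfk hgl (freqNorm_le_add_sub b k m),
    scale_le_max_add_two hfk hm hgl ?_, scale_le_max_add_two hgl hm hfk (freqNorm_sub_le b m k)⟩
  simpa using freqNorm_sub_le b m (m - k)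

lemma two_rpow_mul_collinear_block_le (hb : ∀ i, 0 < b i) (s : ℝ) (q : ℤ)
    (hf : f.support ⊆ dyadicAnnulus b i) (hg : g.support ⊆ dyadicAnnulus b j) :
    2 ^ (q * s) * lr 2 ((dyadicAnnulus b q).indicator (restrictedConv IsParallel f g)) ≤
      2 * lineConst b * (2 ^ (((max i j : ℤ) : ℝ) * s + ((min i j : ℤ) : ℝ) * (1 / 2)) *
        (lr 2 f * lr 2 g)) * outputWeight (s + 1 / 2) (q - max i j) := by
  by_cases hzero : ∀ m, (dyadicAnnulus b q).indicator (restrictedConv IsParallel f g) m = 0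
  · simp [lr_two_eq, hzero]
  push Not at hzero
  obtain ⟨m, hm⟩ := hzero
  obtain ⟨hq, hi, hj⟩ := scales_of_restrictedConv_ne_zero hf hg (mem_of_indicator_ne_zero hm)
    (fun h => hm (indicator_apply_eq_zero.2 fun _ => h))
  have hexp : (q : ℝ) * s + ((min (min i j) q : ℤ) : ℝ) * (1 / 2) ≤
      1 + (((max i j : ℤ) : ℝ) * s + ((min i j : ℤ) : ℝ) * (1 / 2)) +
        ((q - max i j : ℤ) : ℝ) * (s + 1 / 2) := by
    have : min (min i j) q + max i j ≤ min i j + q + 2 := by omega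
    have : ((min (min i j) q : ℤ) : ℝ) + (max i j : ℤ) ≤ (min i j : ℤ) + q + 2 := by
      exact_mod_cast this
    rw [Int.cast_sub]
    linarith
  calc 2 ^ (q * s) * lr 2 ((dyadicAnnulus b q).indicator (restrictedConv IsParallel f g))
      ≤ 2 ^ (q * s) * (lineConst b * 2 ^ (((min (min i j) q : ℤ) : ℝ) * (1 / 2)) *
          (lr 2 f * lr 2 g)) := by
        gcongr
        exact collinear_block_le hb q hf hg
    _ = lineConst b * 2 ^ (q * s + ((min (min i j) q : ℤ) : ℝ) * (1 / 2)) *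
          (lr 2 f * lr 2 g) := by
        rw [two_rpow_add]
        ring
    _ ≤ lineConst b * 2 ^ (1 + (((max i j : ℤ) : ℝ) * s + ((min i j : ℤ) : ℝ) * (1 / 2)) +
          ((q - max i j : ℤ) : ℝ) * (s + 1 / 2)) * (lr 2 f * lr 2 g) := by
        gcongr
        exact one_le_two
    _ = _ := by
        rw [outputWeight, if_pos (by omega), two_rpow_add, two_rpow_add 1, ENNReal.rpow_one]
        ring

lemma tsum_two_rpow_mul_collinear_le (hb : ∀ i, 0 < b i) (s : ℝ) {f g : ℤ → Lat d → ℝ≥0∞}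
    (hf : ∀ i, (f i).support ⊆ dyadicAnnulus b i) (hg : ∀ j, (g j).support ⊆ dyadicAnnulus b j) :
    ∑' q : ℤ, 2 ^ (q * s) * lr 2 ((dyadicAnnulus b q).indicator
        (restrictedConv IsParallel (fun k => ∑' i, f i k) (fun k => ∑' j, g j k))) ≤
      collinearConst b s * dyadicPairing s (fun i => lr 2 (f i)) (fun j => lr 2 (g j)) := by
  have hsplit (q : ℤ) : lr 2 ((dyadicAnnulus b q).indicator
        (restrictedConv IsParallel (fun k => ∑' i, f i k) (fun k => ∑' j, g j k))) ≤
      ∑' i, ∑' j, lr 2 ((dyadicAnnulus b q).indicator (restrictedConv IsParallel (f i) (g j))) := by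
    refine (lr_mono 2 fun m => le_of_eq ?_).trans
      ((lr_two_tsum_le _).trans (ENNReal.tsum_le_tsum fun i => lr_two_tsum_le _))
    by_cases hm : m ∈ dyadicAnnulus b q <;> simp [hm, restrictedConv_tsum_tsum]
  have hshift (M : ℤ) : ∑' q, outputWeight (s + 1 / 2) (q - M) = ∑' n, outputWeight (s + 1 / 2) n :=
    (Equiv.subRight M).tsum_eq _
  calc _ ≤ ∑' q : ℤ, 2 ^ (q * s) * ∑' i, ∑' j,
          lr 2 ((dyadicAnnulus b q).indicator (restrictedConv IsParallel (f i) (g j))) := by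
        gcongr with q
        exact hsplit q
    _ = ∑' i, ∑' j, ∑' q : ℤ, 2 ^ (q * s) *
          lr 2 ((dyadicAnnulus b q).indicator (restrictedConv IsParallel (f i) (g j))) := by
        simp_rw [← ENNReal.tsum_mul_left]
        rw [ENNReal.tsum_comm]
        congr 1 with i
        exact ENNReal.tsum_comm
    _ ≤ ∑' i, ∑' j, ∑' q : ℤ,
          2 * lineConst b * (2 ^ (((max i j : ℤ) : ℝ) * s + ((min i j : ℤ) : ℝ) * (1 / 2)) *
            (lr 2 (f i) * lr 2 (g j))) * outputWeight (s + 1 / 2) (q - max i j) :=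
        ENNReal.tsum_le_tsum fun i => ENNReal.tsum_le_tsum fun j => ENNReal.tsum_le_tsum fun q =>
          two_rpow_mul_collinear_block_le hb s q (hf i) (hg j)
    _ = collinearConst b s * dyadicPairing s (fun i => lr 2 (f i)) (fun j => lr 2 (g j)) := by
        simp_rw [ENNReal.tsum_mul_left, hshift, ENNReal.tsum_mul_right, ENNReal.tsum_mul_left]
        rw [collinearConst, dyadicPairing]
        ring

end CollinearConvolution

section DyadicPairing

/-- Homogeneous part of a `B^s_{2,1}` norm, as a function of the `L²` norms of the dyadic
blocks. -/
def dyadicNorm (s : ℝ) (α : ℤ → ℝ≥0∞) : ℝ≥0∞ := ∑' i : ℤ, 2 ^ (i * s) * α i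

variable {s : ℝ}

lemma dyadicPairing_comm (s : ℝ) (α β : ℤ → ℝ≥0∞) :
    dyadicPairing s α β = dyadicPairing s β α := by
  rw [dyadicPairing, ENNReal.tsum_comm]
  simp_rw [dyadicPairing, max_comm, min_comm, mul_comm (α _)]

lemma dyadicNorm_mul_dyadicNorm (x y : ℝ) (α β : ℤ → ℝ≥0∞) :
    dyadicNorm x α * dyadicNorm y β = ∑' i : ℤ, ∑' j : ℤ, 2 ^ (i * x + j * y) * (α i * β j) := by
  simp_rw [dyadicNorm, ← ENNReal.tsum_mul_right, ← ENNReal.tsum_mul_left, two_rpow_add]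
  congr! 4
  ring

lemma dyadicPairing_le_of_exponent_le {t x y : ℝ} {α β : ℤ → ℝ≥0∞}
    (h : ∀ i j, α i ≠ 0 → β j ≠ 0 →
      ((max i j : ℤ) : ℝ) * s + ((min i j : ℤ) : ℝ) * (1 / 2) ≤ t + (i * x + j * y)) :
    dyadicPairing s α β ≤ 2 ^ t * (dyadicNorm x α * dyadicNorm y β) := by
  simp_rw [dyadicNorm_mul_dyadicNorm, ← ENNReal.tsum_mul_left]
  refine ENNReal.tsum_le_tsum fun i => ENNReal.tsum_le_tsum fun j => ?_
  rcases eq_or_ne (α i) 0 with hα | hα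
  · simp [hα]
  rcases eq_or_ne (β j) 0 with hβ | hβ
  · simp [hβ]
  rw [← mul_assoc (2 ^ t), ← two_rpow_add]
  exact mul_le_mul_left (two_rpow_le_two_rpow (h i j hα hβ)) _

lemma dyadicPairing_le_of_le_half (hs : s ≤ 1 / 2) (α β : ℤ → ℝ≥0∞) :
    dyadicPairing s α β ≤ dyadicNorm (1 / 2) α * dyadicNorm s β := by
  simpa using dyadicPairing_le_of_exponent_le (t := 0) fun i j _ _ => by
    rcases le_total i j with h | h
    · rw [max_eq_right h, min_eq_left h]
      linarith
    · rw [max_eq_left h, min_eq_right h]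
      have hij : (j : ℝ) ≤ i := mod_cast h
      nlinarith

lemma dyadicPairing_le_of_half_le (hs : 1 / 2 ≤ s) {J : ℕ} {α β : ℤ → ℝ≥0∞}
    (hα : ∀ i, α i ≠ 0 → -(J : ℤ) ≤ i) (hβ : ∀ j, β j ≠ 0 → -(J : ℤ) ≤ j) :
    dyadicPairing s α β ≤ 2 ^ (J * (s - 1 / 2)) * (dyadicNorm s α * dyadicNorm s β) := by
  refine dyadicPairing_le_of_exponent_le fun i j hi hj => ?_
  have hmin : -(J : ℝ) ≤ (min i j : ℤ) := mod_cast le_min (hα i hi) (hβ j hj)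
  have hsum : ((max i j : ℤ) : ℝ) + (min i j : ℤ) = i + j := mod_cast max_add_min i j
  linear_combination s * hsum + (s - 1 / 2) * hmin

lemma dyadicPairing_le_add (s : ℝ) (α β : ℤ → ℝ≥0∞) :
    dyadicPairing s α β ≤
      dyadicNorm (1 / 2) α * dyadicNorm s β + dyadicNorm s α * dyadicNorm (1 / 2) β := by
  simp_rw [dyadicNorm_mul_dyadicNorm, ← ENNReal.tsum_add]
  refine ENNReal.tsum_le_tsum fun i => ENNReal.tsum_le_tsum fun j => ?_
  rcases le_total i j with h | h
  · rw [max_eq_right h, min_eq_left h, add_comm (_ * s)]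
    exact le_self_add
  · rw [max_eq_left h, min_eq_right h]
    exact le_add_self

end DyadicPairing

section LittlewoodPaley

variable {φ : ℝ → ℝ} {b : Fin d → ℝ}

lemma GoodBump.le_one (hφ : GoodBump φ) (ξ : ℝ) : φ ξ ≤ 1 := by
  rcases eq_or_ne ξ 0 with rfl | hξ
  · have hzero : φ 0 = 0 := by
      by_contra h
      have := (hφ.2.2.1 0 h).1
      norm_num at this
    exact hzero.le.trans zero_le_one
  · simpa using le_hasSum (hφ.2.2.2 ξ hξ) 0 fun j _ => hφ.2.1 _

lemma blockW_nonneg (hφ : GoodBump φ) (b : Fin d → ℝ) (j : ℤ) (k : Lat d) : 0 ≤ blockW φ b j k :=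
  hφ.2.1 _

lemma mem_dyadicAnnulus_of_blockW_ne_zero (hφ : GoodBump φ) {j : ℤ} {k : Lat d}
    (h : blockW φ b j k ≠ 0) : k ∈ dyadicAnnulus b j := by
  have hpos : (0 : ℝ) < 2 ^ j := by positivity
  have hsupp := hφ.2.2.1 _ h
  rwa [abs_of_nonneg (mul_nonneg (by positivity) (freqNorm_nonneg b k)), zpow_neg,
    inv_mul_eq_div, le_div_iff₀ hpos, div_le_iff₀ hpos] at hsupp

lemma neg_ceil_le_of_mem_dyadicAnnulus (hb : ∀ i, 0 < b i) {j : ℤ} {k : Lat d}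
    (hk : k ∈ dyadicAnnulus b j) : -(⌈8 / 3 * ∑ i, b i⌉₊ : ℤ) ≤ j := by
  have hsum : 0 ≤ ∑ i, b i := Finset.sum_nonneg fun i _ => (hb i).le
  have hone : 1 ≤ 8 / 3 * (∑ i, b i) * 2 ^ j :=
    calc 1 ≤ (∑ i, b i) * freqNorm b k :=
          one_le_sum_mul_freqNorm hb (ne_zero_of_mem_dyadicAnnulus hk)
      _ ≤ (∑ i, b i) * (8 / 3 * 2 ^ j) := by
          gcongr
          exact hk.2
      _ = 8 / 3 * (∑ i, b i) * 2 ^ j := by ring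
  set J := ⌈8 / 3 * ∑ i, b i⌉₊
  have hlt : (1 : ℝ) < 2 ^ (J + j) :=
    calc 1 ≤ 8 / 3 * (∑ i, b i) * 2 ^ j := hone
      _ ≤ J * 2 ^ j := by
          gcongr
          exact Nat.le_ceil _
      _ < 2 ^ J * 2 ^ j := by
          gcongr
          exact_mod_cast J.lt_two_pow_self
      _ = 2 ^ (J + j) := by rw [zpow_add₀ two_ne_zero, zpow_natCast]
  have := (one_lt_zpow_iff_right₀ one_lt_two).1 hlt
  omega

lemma rpow_le_rpow_add_rpow {x y t : ℝ} (hx : 0 < x) (hxt : x ≤ t) (hty : t ≤ y) (s : ℝ) :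
    t ^ s ≤ x ^ s + y ^ s := by
  have ht := hx.trans_le hxt
  rcases le_total 0 s with hs | hs
  · exact (Real.rpow_le_rpow ht.le hty hs).trans (le_add_of_nonneg_left (by positivity))
  · exact (Real.rpow_le_rpow_of_nonpos hx hxt hs).trans
      (le_add_of_nonneg_right (Real.rpow_nonneg (ht.le.trans hty) s))

lemma freqNorm_rpow_le_of_mem_dyadicAnnulus {j : ℤ} {k : Lat d} (hk : k ∈ dyadicAnnulus b j)
    (s : ℝ) : ENNReal.ofReal (freqNorm b k ^ s) ≤
      ENNReal.ofReal ((3 / 4) ^ s + (8 / 3) ^ s) * 2 ^ (j * s) := by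
  have hpos : (0 : ℝ) < 2 ^ j := by positivity
  rw [ENNReal.rpow_mul, ← ofReal_two_zpow, ENNReal.ofReal_rpow_of_pos hpos,
    ← ENNReal.ofReal_mul (by positivity), add_mul, ← Real.mul_rpow (by norm_num) hpos.le,
    ← Real.mul_rpow (by norm_num) hpos.le]
  exact ENNReal.ofReal_le_ofReal (rpow_le_rpow_add_rpow (by positivity) hk.1 hk.2 s)

variable [NormedAddCommGroup E]

/-- The sequence whose `ℓ²` norm is the `H^s` norm: `|k|^s |ĉ_k|` for `k ≠ 0`, and `|ĉ_0|` at the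
zero mode. -/
def hsSeq (b : Fin d → ℝ) (s : ℝ) (c : Lat d → E) (k : Lat d) : ℝ≥0∞ :=
  if k = 0 then ‖c 0‖ₑ else ENNReal.ofReal (freqNorm b k ^ s) * ‖c k‖ₑ

lemma hsN_eq_lr_two (b : Fin d → ℝ) (s : ℝ) (c : Lat d → E) : hsN b s c = lr 2 (hsSeq b s c) := by
  rw [lr_two_eq, ENNReal.tsum_eq_add_tsum_ite 0, hsN]
  congr 2
  · simp [hsSeq, enorm_eq_nnnorm]
  congr 1 with k
  by_cases hk : k = 0
  · simp [hk]
  · have hsq : freqNorm b k ^ (2 * s) = (freqNorm b k ^ s) ^ 2 := by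
      rw [mul_comm, Real.rpow_mul (freqNorm_nonneg b k), Real.rpow_two]
    rw [if_neg hk, if_neg hk, hsSeq, if_neg hk, mul_pow, hsq,
      ENNReal.ofReal_pow (Real.rpow_nonneg (freqNorm_nonneg b k) s), enorm_eq_nnnorm]

variable [NormedSpace ℝ E]

lemma enorm_blockOp (hφ : GoodBump φ) (b : Fin d → ℝ) (j : ℤ) (c : Lat d → E) (k : Lat d) :
    ‖blockOp φ b j c k‖ₑ = ENNReal.ofReal (blockW φ b j k) * ‖c k‖ₑ := by
  rw [blockOp, enorm_smul, Real.enorm_eq_ofReal (blockW_nonneg hφ b j k)]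

lemma support_enorm_blockOp_subset (hφ : GoodBump φ) (b : Fin d → ℝ) (j : ℤ) (c : Lat d → E) :
    (fun k => ‖blockOp φ b j c k‖ₑ).support ⊆ dyadicAnnulus b j := fun k hk =>
  mem_dyadicAnnulus_of_blockW_ne_zero hφ fun h => hk (by simp [blockOp, h])

lemma enorm_blockOp_le_indicator (hφ : GoodBump φ) (b : Fin d → ℝ) (j : ℤ) (c : Lat d → E)
    (k : Lat d) :
    ‖blockOp φ b j c k‖ₑ ≤ (dyadicAnnulus b j).indicator (fun k => ‖c k‖ₑ) k := by
  refine le_indicator (f := fun k => ‖blockOp φ b j c k‖ₑ) (fun k _ => ?_) (fun k hk => ?_) k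
  · rw [enorm_blockOp hφ]
    exact mul_le_of_le_one_left' (ENNReal.ofReal_le_one.2 (hφ.le_one _))
  · by_contra h
    exact hk (support_enorm_blockOp_subset hφ b j c (mt le_of_eq h))

lemma tsum_enorm_blockOp (hφ : GoodBump φ) (hb : ∀ i, 0 < b i) (c : Lat d → E) (k : Lat d) :
    ∑' j, ‖blockOp φ b j c k‖ₑ = ‖ul c k‖ₑ := by
  rcases eq_or_ne k 0 with rfl | hk
  · rw [ul, if_pos rfl, enorm_zero, ENNReal.tsum_eq_zero]
    intro j
    by_contra h
    exact ne_zero_of_mem_dyadicAnnulus (support_enorm_blockOp_subset hφ b j c h) rfl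
  · have hsum : HasSum (fun j => blockW φ b j k) 1 := hφ.2.2.2 _ (freqNorm_pos hb hk).ne'
    simp_rw [enorm_blockOp hφ, ENNReal.tsum_mul_right]
    rw [← ENNReal.ofReal_tsum_of_nonneg (fun j => blockW_nonneg hφ b j k) hsum.summable,
      hsum.tsum_eq, ENNReal.ofReal_one, one_mul, ul, if_neg hk]

/-- The `L²` norms of the Littlewood–Paley blocks. -/
def blockNorm (φ : ℝ → ℝ) (b : Fin d → ℝ) (c : Lat d → E) (j : ℤ) : ℝ≥0∞ :=
  eL2 (blockOp φ b j c)

lemma besovN_one_eq (φ : ℝ → ℝ) (b : Fin d → ℝ) (s : ℝ) (c : Lat d → E) :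
    besovN φ b s 1 c = ‖c 0‖ₑ + dyadicNorm s (blockNorm φ b c) :=
  lr_one_option _

lemma dyadicNorm_blockNorm_le_besovN (φ : ℝ → ℝ) (b : Fin d → ℝ) (s : ℝ) (c : Lat d → E) :
    dyadicNorm s (blockNorm φ b c) ≤ besovN φ b s 1 c :=
  besovN_one_eq φ b s c ▸ le_add_self

lemma neg_ceil_le_of_blockNorm_ne_zero (hφ : GoodBump φ) (hb : ∀ i, 0 < b i) {c : Lat d → E}
    {j : ℤ} (hj : blockNorm φ b c j ≠ 0) : -(⌈8 / 3 * ∑ i, b i⌉₊ : ℤ) ≤ j := by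
  obtain ⟨k, hk⟩ : ∃ k, ‖blockOp φ b j c k‖ₑ ≠ 0 := by
    by_contra! h
    exact hj (by simp [blockNorm, eL2_eq_lr_two, lr_two_eq, h])
  exact neg_ceil_le_of_mem_dyadicAnnulus hb (support_enorm_blockOp_subset hφ b j c hk)

/-- Constant of the embedding `B^s_{2,1} ⊂ H^s`. -/
def embeddingConst (s : ℝ) : ℝ≥0∞ := 1 + ENNReal.ofReal ((3 / 4) ^ s + (8 / 3) ^ s)

lemma embeddingConst_lt_top (s : ℝ) : embeddingConst s < ⊤ :=
  ENNReal.add_lt_top.2 ⟨ENNReal.one_lt_top, ENNReal.ofReal_lt_top⟩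

lemma hsN_le_besovN (hφ : GoodBump φ) (hb : ∀ i, 0 < b i) (s : ℝ) (c : Lat d → E) :
    hsN b s c ≤ embeddingConst s * besovN φ b s 1 c := by
  set C := ENNReal.ofReal ((3 / 4) ^ s + (8 / 3) ^ s)
  have hpoint (k : Lat d) : hsSeq b s c k ≤ (if k = 0 then ‖c 0‖ₑ else 0) +
      ∑' j : ℤ, C * 2 ^ (j * s) * ‖blockOp φ b j c k‖ₑ := by
    by_cases hk : k = 0
    · simp [hsSeq, hk]
    have hck : ‖c k‖ₑ = ∑' j, ‖blockOp φ b j c k‖ₑ := by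
      rw [tsum_enorm_blockOp hφ hb, ul, if_neg hk]
    rw [hsSeq, if_neg hk, if_neg hk, zero_add, hck, ← ENNReal.tsum_mul_left]
    refine ENNReal.tsum_le_tsum fun j => ?_
    by_cases hj : ‖blockOp φ b j c k‖ₑ = 0
    · simp [hj]
    · gcongr
      exact freqNorm_rpow_le_of_mem_dyadicAnnulus (support_enorm_blockOp_subset hφ b j c hj) s
  have hzero : lr 2 (fun k : Lat d => if k = 0 then ‖c 0‖ₑ else 0) ≤ ‖c 0‖ₑ :=
    lr_two_le_iff.2 (by simp [ite_pow])
  calc hsN b s c = lr 2 (hsSeq b s c) := hsN_eq_lr_two b s c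
    _ ≤ lr 2 (fun k : Lat d => if k = 0 then ‖c 0‖ₑ else 0) +
          ∑' j : ℤ, lr 2 (fun k => C * 2 ^ (j * s) * ‖blockOp φ b j c k‖ₑ) :=
        (lr_mono 2 hpoint).trans ((lr_two_add_le _ _).trans
          (add_le_add_right (lr_two_tsum_le _) _))
    _ ≤ ‖c 0‖ₑ + C * dyadicNorm s (blockNorm φ b c) := by
        simp_rw [lr_const_mul two_ne_zero, mul_assoc, ENNReal.tsum_mul_left, ← eL2_eq_lr_two]
        exact add_le_add_left hzero _
    _ ≤ embeddingConst s * besovN φ b s 1 c := by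
        rw [besovN_one_eq, embeddingConst, mul_add]
        exact add_le_add (le_mul_of_one_le_left' le_self_add) (mul_le_mul_left le_add_self _)

end LittlewoodPaley

section WaveEigenbasis

lemma enorm_complex_ofReal (x : ℝ) : ‖(x : ℂ)‖ₑ = ENNReal.ofReal |x| := by
  rw [← ofReal_norm, Complex.norm_real, Real.norm_eq_abs]

lemma enorm_le_ofReal_mul_of_norm_le {F G : Type*} [NormedAddCommGroup F] [NormedAddCommGroup G]
    {x : F} {y : G} {r : ℝ} (hr : 0 ≤ r) (h : ‖x‖ ≤ r * ‖y‖) :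
    ‖x‖ₑ ≤ ENNReal.ofReal r * ‖y‖ₑ := by
  rw [← ofReal_norm, ← ofReal_norm, ← ENNReal.ofReal_mul hr]
  exact ENNReal.ofReal_le_ofReal h

lemma norm_div_sqrt_two_le (z : ℂ) : ‖z / ((Real.sqrt 2 : ℝ) : ℂ)‖ ≤ ‖z‖ := by
  rw [norm_div, Complex.norm_real, Real.norm_of_nonneg (Real.sqrt_nonneg _)]
  exact div_le_self (norm_nonneg _) (Real.one_le_sqrt.2 one_le_two)

lemma norm_sum_ofReal_mul_le {x : Fin d → ℝ} {r : ℝ} (hx : ∀ i, |x i| ≤ r) (v : Fin d → ℂ) :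
    ‖∑ i, (x i : ℂ) * v i‖ ≤ d * r * ‖v‖ := by
  calc ‖∑ i, (x i : ℂ) * v i‖ ≤ ∑ _i : Fin d, r * ‖v‖ := by
        refine norm_sum_le_of_le _ fun i _ => ?_
        rw [norm_mul, Complex.norm_real, Real.norm_eq_abs]
        exact mul_le_mul (hx i) (norm_le_pi_norm v i) (norm_nonneg _) ((abs_nonneg _).trans (hx i))
    _ = d * r * ‖v‖ := by simp [mul_assoc]

lemma enorm_pairC_fromEig_le (b : Fin d → ℝ) (c : ℝ → Lat d → ℂ) (m : Lat d) :
    ‖pairC (fromEig b c) m‖ₑ ≤ ‖c 1 m‖ₑ + ‖c (-1) m‖ₑ := by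
  have hnorm : ‖pairC (fromEig b c) m‖ ≤ ‖c 1 m‖ + ‖c (-1) m‖ := by
    rw [pairC, Prod.norm_mk, max_le_iff, pi_norm_le_iff_of_nonneg (by positivity)]
    refine ⟨(norm_div_sqrt_two_le _).trans (norm_add_le _ _), fun i => ?_⟩
    calc _ ≤ |sg m * (freq b m i / freqNorm b m)| * ‖c 1 m - c (-1) m‖ := by
          refine (norm_div_sqrt_two_le _).trans_eq ?_
          rw [norm_mul, norm_neg, Complex.norm_real, Real.norm_eq_abs]
      _ ≤ 1 * ‖c 1 m - c (-1) m‖ := by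
          rw [abs_mul, abs_sg, one_mul]
          gcongr
          exact abs_freq_div_freqNorm_le_one b m i
      _ ≤ ‖c 1 m‖ + ‖c (-1) m‖ := by
          rw [one_mul]
          exact norm_sub_le _ _
  simpa only [← ofReal_norm, ← ENNReal.ofReal_add (norm_nonneg _) (norm_nonneg _)] using
    ENNReal.ofReal_le_ofReal hnorm

lemma enorm_eig_le (b : Fin d → ℝ) (A : PairF d) {α : ℝ} (hα : |α| = 1) (k : Lat d) :
    ‖eig b A α k‖ₑ ≤ (1 + d) * ‖pairC A k‖ₑ := by
  have hnorm : ‖eig b A α k‖ ≤ (1 + d) * ‖pairC A k‖ := by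
    have hfst : ‖A.1 k‖ ≤ ‖pairC A k‖ := norm_fst_le (pairC A k)
    have hsnd : ‖A.2 k‖ ≤ ‖pairC A k‖ := norm_snd_le (pairC A k)
    have hdot := norm_sum_ofReal_mul_le (abs_freq_div_freqNorm_le_one b k) (A.2 k)
    refine (norm_div_sqrt_two_le _).trans ((norm_sub_le _ _).trans ?_)
    rw [norm_mul, Complex.norm_real, Real.norm_eq_abs, abs_mul, abs_sg, hα, one_mul, one_mul]
    calc _ ≤ ‖A.1 k‖ + d * ‖A.2 k‖ := by linarith
      _ ≤ ‖pairC A k‖ + d * ‖pairC A k‖ := by gcongr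
      _ = (1 + d) * ‖pairC A k‖ := by ring
  refine (enorm_le_ofReal_mul_of_norm_le (by positivity) hnorm).trans_eq ?_
  rw [ENNReal.ofReal_add zero_le_one d.cast_nonneg, ENNReal.ofReal_one, ENNReal.ofReal_natCast]

end WaveEigenbasis

section QuadraticOperator

/-- Coordinates of `𝒬₂(A, B)` in the eigenbasis `Φ_m^γ`. -/
def Q2coeff (b : Fin d → ℝ) (κ : ℝ) (A B : PairF d) (γ : ℝ) (m : Lat d) : ℂ :=
  if m = 0 then 0 else
    (-Complex.I) * (((Real.sqrt (2 * vol b))⁻¹ : ℝ) : ℂ) * (((κ + 3) / 4 : ℝ) : ℂ) *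
      ((γ * sg m * freqNorm b m : ℝ) : ℂ) *
      ∑' k : Lat d,
        (if k ≠ 0 ∧ m - k ≠ 0 ∧
            sg k * freqNorm b k + sg (m - k) * freqNorm b (m - k) = γ * sg m * freqNorm b m then
          eig b A γ k * eig b B γ (m - k)
        else 0)

/-- Constant of the pointwise domination of `𝒬₂` by a collinear convolution. -/
def Q2const (b : Fin d → ℝ) (κ : ℝ) : ℝ≥0∞ :=
  2 * (ENNReal.ofReal |(Real.sqrt (2 * vol b))⁻¹| * ENNReal.ofReal |(κ + 3) / 4| * (1 + d) ^ 2)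

variable {φ : ℝ → ℝ} {b : Fin d → ℝ}

lemma Q2const_lt_top (b : Fin d → ℝ) (κ : ℝ) : Q2const b κ < ⊤ := by
  unfold Q2const
  finiteness

lemma Q2res_eq_fromEig (b : Fin d → ℝ) (κ : ℝ) (A B : PairF d) :
    Q2res b κ A B = fromEig b (Q2coeff b κ A B) := rfl

lemma enorm_tsum_resonant_le (hb : ∀ i, 0 < b i) (A B : PairF d) {γ : ℝ} (hγ : |γ| = 1)
    (m : Lat d) :
    ‖∑' k : Lat d, (if k ≠ 0 ∧ m - k ≠ 0 ∧
        sg k * freqNorm b k + sg (m - k) * freqNorm b (m - k) = γ * sg m * freqNorm b m then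
      eig b A γ k * eig b B γ (m - k) else 0)‖ₑ ≤
      (1 + d) ^ 2 * restrictedConv IsParallel (fun k => ‖ul (pairC A) k‖ₑ)
        (fun k => ‖ul (pairC B) k‖ₑ) m := by
  rw [restrictedConv, ← ENNReal.tsum_mul_left]
  refine enorm_tsum_le_tsum_enorm.trans (ENNReal.tsum_le_tsum fun k => ?_)
  split_ifs with hres hpar
  · obtain ⟨hk, hmk, -⟩ := hres
    rw [ul, ul, if_neg hk, if_neg hmk, enorm_mul]
    exact (mul_le_mul' (enorm_eig_le b A hγ k) (enorm_eig_le b B hγ (m - k))).trans_eq (by ring)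
  · exact absurd (isParallel_of_resonance hb hγ hres.2.2) hpar
  all_goals simp

lemma enorm_pairC_Q2res_le (hb : ∀ i, 0 < b i) (κ : ℝ) (A B : PairF d) (m : Lat d) :
    ‖pairC (Q2res b κ A B) m‖ₑ ≤ Q2const b κ * (ENNReal.ofReal (freqNorm b m) *
      restrictedConv IsParallel (fun k => ‖ul (pairC A) k‖ₑ) (fun k => ‖ul (pairC B) k‖ₑ) m) := by
  set conv := restrictedConv IsParallel (fun k => ‖ul (pairC A) k‖ₑ) (fun k => ‖ul (pairC B) k‖ₑ) m
  have hcoeff {γ : ℝ} (hγ : |γ| = 1) : ‖Q2coeff b κ A B γ m‖ₑ ≤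
      ENNReal.ofReal |(Real.sqrt (2 * vol b))⁻¹| * ENNReal.ofReal |(κ + 3) / 4| *
        ENNReal.ofReal (freqNorm b m) * ((1 + d) ^ 2 * conv) := by
    rw [Q2coeff]
    split_ifs
    · simp
    have hI : ‖-Complex.I‖ₑ = 1 := by rw [← ofReal_norm]; simp
    rw [enorm_mul, enorm_mul, enorm_mul, enorm_mul, hI, one_mul]
    simp only [enorm_complex_ofReal, abs_mul γ, abs_mul (γ * _), hγ, abs_sg, one_mul,
      abs_of_nonneg (freqNorm_nonneg b m)]
    gcongr
    exact enorm_tsum_resonant_le hb A B hγ m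
  rw [Q2res_eq_fromEig, Q2const]
  exact (enorm_pairC_fromEig_le b _ m).trans
    ((add_le_add (hcoeff abs_one) (hcoeff (by norm_num))).trans_eq (by ring))

lemma pairC_Q2res_zero (b : Fin d → ℝ) (κ : ℝ) (A B : PairF d) : pairC (Q2res b κ A B) 0 = 0 := by
  refine enorm_eq_zero.1 (le_antisymm ?_ zero_le)
  rw [Q2res_eq_fromEig]
  exact (enorm_pairC_fromEig_le b _ 0).trans_eq (by simp [Q2coeff])

lemma blockNorm_Q2res_le (hφ : GoodBump φ) (hb : ∀ i, 0 < b i) (κ : ℝ) (A B : PairF d) (q : ℤ) :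
    blockNorm φ b (pairC (Q2res b κ A B)) q ≤ Q2const b κ * ENNReal.ofReal (8 / 3) * 2 ^ (q : ℝ) *
      lr 2 ((dyadicAnnulus b q).indicator (restrictedConv IsParallel
        (fun k => ‖ul (pairC A) k‖ₑ) (fun k => ‖ul (pairC B) k‖ₑ))) := by
  rw [blockNorm, eL2_eq_lr_two, ← lr_const_mul two_ne_zero]
  refine lr_mono 2 fun m => (enorm_blockOp_le_indicator hφ b q _ m).trans ?_
  by_cases hm : m ∈ dyadicAnnulus b q
  · have hfreq : ENNReal.ofReal (freqNorm b m) ≤ ENNReal.ofReal (8 / 3) * 2 ^ (q : ℝ) := by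
      rw [← ofReal_two_zpow, ← ENNReal.ofReal_mul (by norm_num)]
      exact ENNReal.ofReal_le_ofReal hm.2
    rw [indicator_of_mem hm, indicator_of_mem hm]
    refine (enorm_pairC_Q2res_le hb κ A B m).trans ?_
    rw [mul_assoc (Q2const b κ), mul_assoc (Q2const b κ)]
    gcongr
  · simp [hm]

/-- Constant of the dyadic bilinear estimate for `𝒬₂`. -/
def Q2besovConst (b : Fin d → ℝ) (κ s : ℝ) : ℝ≥0∞ :=
  Q2const b κ * ENNReal.ofReal (8 / 3) * collinearConst b s

lemma Q2besovConst_lt_top (b : Fin d → ℝ) (κ : ℝ) {s : ℝ} (hs : -(1 / 2) < s) :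
    Q2besovConst b κ s < ⊤ :=
  ENNReal.mul_lt_top (ENNReal.mul_lt_top (Q2const_lt_top b κ) ENNReal.ofReal_lt_top)
    (collinearConst_lt_top b hs)

lemma besovN_Q2res_le (hφ : GoodBump φ) (hb : ∀ i, 0 < b i) (κ s : ℝ) (A B : PairF d) :
    besovN φ b (s - 1) 1 (pairC (Q2res b κ A B)) ≤ Q2besovConst b κ s *
      dyadicPairing s (blockNorm φ b (pairC A)) (blockNorm φ b (pairC B)) := by
  have hconv := tsum_two_rpow_mul_collinear_le hb s
    (support_enorm_blockOp_subset hφ b · (pairC A)) (support_enorm_blockOp_subset hφ b · (pairC B))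
  simp only [tsum_enorm_blockOp hφ hb, ← eL2_eq_lr_two] at hconv
  rw [besovN_one_eq, pairC_Q2res_zero, enorm_zero, zero_add, Q2besovConst, mul_assoc (_ * _)]
  refine le_trans ?_ (mul_le_mul_right hconv _)
  rw [dyadicNorm, ← ENNReal.tsum_mul_left]
  refine ENNReal.tsum_le_tsum fun q => ?_
  have hweight : (2 : ℝ≥0∞) ^ (q * s) = 2 ^ (q * (s - 1)) * 2 ^ (q : ℝ) := by
    rw [← two_rpow_add]
    ring_nf
  rw [hweight]
  exact (mul_le_mul_right (blockNorm_Q2res_le hφ hb κ A B q) _).trans_eq (by ring)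

lemma hsN_Q2res_le (hφ : GoodBump φ) (hb : ∀ i, 0 < b i) (κ σ : ℝ) (A B : PairF d) :
    hsN b (σ - 2) (pairC (Q2res b κ A B)) ≤
      embeddingConst (σ - 2) * Q2besovConst b κ (σ - 1) *
        dyadicPairing (σ - 1) (blockNorm φ b (pairC A)) (blockNorm φ b (pairC B)) := by
  have hσ : σ - 2 = σ - 1 - 1 := by ring
  rw [hσ, mul_assoc]
  exact (hsN_le_besovN hφ hb _ _).trans (mul_le_mul_right (besovN_Q2res_le hφ hb κ _ A B) _)

lemma hsN_Q2res_le_min (hφ : GoodBump φ) (hb : ∀ i, 0 < b i) (κ : ℝ) {σ : ℝ} (hσ : σ ≤ 3 / 2)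
    (A B : PairF d) :
    hsN b (σ - 2) (pairC (Q2res b κ A B)) ≤
      embeddingConst (σ - 2) * Q2besovConst b κ (σ - 1) *
        min (besovN φ b (1 / 2) 1 (pairC A) * besovN φ b (σ - 1) 1 (pairC B))
          (besovN φ b (1 / 2) 1 (pairC B) * besovN φ b (σ - 1) 1 (pairC A)) := by
  have hpairing (A B : PairF d) :
      dyadicPairing (σ - 1) (blockNorm φ b (pairC A)) (blockNorm φ b (pairC B)) ≤
        besovN φ b (1 / 2) 1 (pairC A) * besovN φ b (σ - 1) 1 (pairC B) :=
    (dyadicPairing_le_of_le_half (by linarith) _ _).trans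
      (mul_le_mul' (dyadicNorm_blockNorm_le_besovN φ b _ _)
        (dyadicNorm_blockNorm_le_besovN φ b _ _))
  refine (hsN_Q2res_le hφ hb κ σ A B).trans (mul_le_mul_right (le_min (hpairing A B) ?_) _)
  rw [dyadicPairing_comm]
  exact hpairing B A

/-- Constant of the high-regularity estimate for `𝒬₂`; the last factor reflects that frequencies
are bounded below on the torus. -/
def Q2highConst (b : Fin d → ℝ) (κ σ : ℝ) : ℝ≥0∞ :=
  embeddingConst (σ - 2) * Q2besovConst b κ (σ - 1) *
    2 ^ (⌈8 / 3 * ∑ i, b i⌉₊ * (σ - 1 - 1 / 2))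

lemma Q2highConst_lt_top (b : Fin d → ℝ) (κ : ℝ) {σ : ℝ} (hσ : 1 / 2 < σ) :
    Q2highConst b κ σ < ⊤ :=
  ENNReal.mul_lt_top (ENNReal.mul_lt_top (embeddingConst_lt_top _)
    (Q2besovConst_lt_top b κ (by linarith))) (two_rpow_lt_top _)

lemma hsN_Q2res_le_of_three_halves_le (hφ : GoodBump φ) (hb : ∀ i, 0 < b i) (κ : ℝ) {σ : ℝ}
    (hσ : 3 / 2 ≤ σ) (A B : PairF d) :
    hsN b (σ - 2) (pairC (Q2res b κ A B)) ≤
      Q2highConst b κ σ * besovN φ b (σ - 1) 1 (pairC A) * besovN φ b (σ - 1) 1 (pairC B) := by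
  have hpairing := dyadicPairing_le_of_half_le (show 1 / 2 ≤ σ - 1 by linarith)
    (fun _ => neg_ceil_le_of_blockNorm_ne_zero hφ hb (c := pairC A))
    (fun _ => neg_ceil_le_of_blockNorm_ne_zero hφ hb (c := pairC B))
  refine (hsN_Q2res_le hφ hb κ σ A B).trans ((mul_le_mul_right hpairing _).trans ?_)
  rw [Q2highConst, mul_assoc _ (besovN _ _ _ _ _), ← mul_assoc]
  gcongr <;> exact dyadicNorm_blockNorm_le_besovN φ b _ _

lemma besovN_Q2res_self_le (hφ : GoodBump φ) (hb : ∀ i, 0 < b i) (κ σ : ℝ) (A : PairF d) :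
    besovN φ b (σ - 1) 1 (pairC (Q2res b κ A A)) ≤
      Q2besovConst b κ σ * 2 * besovN φ b (1 / 2) 1 (pairC A) * besovN φ b σ 1 (pairC A) := by
  set α := blockNorm φ b (pairC A)
  calc besovN φ b (σ - 1) 1 (pairC (Q2res b κ A A)) ≤ Q2besovConst b κ σ * dyadicPairing σ α α :=
        besovN_Q2res_le hφ hb κ σ A A
    _ ≤ Q2besovConst b κ σ *
          (dyadicNorm (1 / 2) α * dyadicNorm σ α + dyadicNorm σ α * dyadicNorm (1 / 2) α) := by
        gcongr
        exact dyadicPairing_le_add σ α α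
    _ = Q2besovConst b κ σ * 2 * dyadicNorm (1 / 2) α * dyadicNorm σ α := by ring
    _ ≤ _ := by gcongr <;> exact dyadicNorm_blockNorm_le_besovN φ b _ _

end QuadraticOperator

section TransportOperator

/-- Coordinates of `𝒬₁(u, A)` in the eigenbasis `Φ_m^γ`; the Boolean `α` encodes the sign of
`Φ_k^α`. -/
def Q1coeff (b : Fin d → ℝ) (u : VF d) (A : PairF d) (γ : ℝ) (m : Lat d) : ℂ :=
  if m = 0 then 0 else
    (Complex.I / ((Real.sqrt (vol b) : ℝ) : ℂ)) *
      ∑' k : Lat d, ∑ α : Bool,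
        (if k ≠ 0 ∧
            (if α then (1:ℝ) else -1) * sg k * freqNorm b k = γ * sg m * freqNorm b m then
          eig b A (if α then (1:ℝ) else -1) k *
            (∑ i, (freq b k i : ℂ) * u (m - k) i) *
            (((∑ i, freq b k i * freq b m i) / (freqNorm b k * freqNorm b m) : ℝ) : ℂ)
        else 0)

/-- Constant of the pointwise domination of `𝒬₁` by a convolution over spheres. -/
def Q1const (b : Fin d → ℝ) : ℝ≥0∞ :=
  4 * (‖Complex.I / ((Real.sqrt (vol b) : ℝ) : ℂ)‖ₑ * ((1 + d) * d))

/-- The sequence `|k|^{-γ} |û_k|`, `k ≠ 0`, whose `ℓ¹` norm measures `u` in the estimate of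
`𝒬₁`. -/
def negOrderSeq (b : Fin d → ℝ) (γ : ℝ) (u : VF d) (k : Lat d) : ℝ≥0∞ :=
  if k = 0 then 0 else ENNReal.ofReal (freqNorm b k ^ (-γ)) * ‖u k‖ₑ

variable {b : Fin d → ℝ}

lemma Q1const_lt_top (b : Fin d → ℝ) : Q1const b < ⊤ := by
  unfold Q1const
  finiteness

lemma Q1res_eq_fromEig (b : Fin d → ℝ) (u : VF d) (A : PairF d) :
    Q1res b u A = fromEig b (Q1coeff b u A) := rfl

lemma abs_freq_dot_div_le_one (b : Fin d → ℝ) (k m : Lat d) :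
    |(∑ i, freq b k i * freq b m i) / (freqNorm b k * freqNorm b m)| ≤ 1 := by
  have hdot : ∑ i, freq b k i * freq b m i = inner ℝ (freqVec b k) (freqVec b m) := by
    simp [PiLp.inner_apply, freqVec, mul_comm]
  rw [hdot, freqNorm_eq_norm, freqNorm_eq_norm]
  exact abs_real_inner_div_norm_mul_norm_le_one _ _

lemma enorm_freq_dot_le (b : Fin d → ℝ) (k : Lat d) (v : Fin d → ℂ) :
    ‖∑ i, (freq b k i : ℂ) * v i‖ₑ ≤ d * ENNReal.ofReal (freqNorm b k) * ‖v‖ₑ := by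
  rw [← ENNReal.ofReal_natCast, ← ENNReal.ofReal_mul d.cast_nonneg]
  exact enorm_le_ofReal_mul_of_norm_le (mul_nonneg d.cast_nonneg (freqNorm_nonneg b k))
    (norm_sum_ofReal_mul_le (abs_freq_le_freqNorm b k) v)

lemma freqNorm_eq_of_signed_eq {k m : Lat d} {α γ : ℝ} (hα : |α| = 1) (hγ : |γ| = 1)
    (h : α * sg k * freqNorm b k = γ * sg m * freqNorm b m) : freqNorm b k = freqNorm b m := by
  simpa [abs_mul, hγ, hα, abs_sg, abs_of_nonneg (freqNorm_nonneg b _)] using congrArg abs h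

lemma enorm_transport_interaction_le (u : VF d) (A : PairF d) {α γ : ℝ} (hα : |α| = 1)
    (hγ : |γ| = 1) (k m : Lat d) :
    ‖(if k ≠ 0 ∧ α * sg k * freqNorm b k = γ * sg m * freqNorm b m then
        eig b A α k * (∑ i, (freq b k i : ℂ) * u (m - k) i) *
          (((∑ i, freq b k i * freq b m i) / (freqNorm b k * freqNorm b m) : ℝ) : ℂ)
      else 0)‖ₑ ≤ (1 + d) * d * (ENNReal.ofReal (freqNorm b m) *
        if freqNorm b k = freqNorm b m then ‖ul (pairC A) k‖ₑ * ‖u (m - k)‖ₑ else 0) := by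
  split_ifs with hres hnorm
  · have hcos := ENNReal.ofReal_le_ofReal (abs_freq_dot_div_le_one b k m)
    rw [← enorm_complex_ofReal, ENNReal.ofReal_one] at hcos
    rw [enorm_mul, enorm_mul, ul, if_neg hres.1]
    calc _ ≤ (1 + d) * ‖pairC A k‖ₑ * (d * ENNReal.ofReal (freqNorm b k) * ‖u (m - k)‖ₑ) * 1 :=
          mul_le_mul' (mul_le_mul' (enorm_eig_le b A hα k) (enorm_freq_dot_le b k _)) hcos
      _ = _ := by rw [hnorm]; ring
  · exact absurd (freqNorm_eq_of_signed_eq hα hγ hres.2) hnorm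
  all_goals simp

lemma enorm_pairC_Q1res_le (u : VF d) (A : PairF d) (m : Lat d) :
    ‖pairC (Q1res b u A) m‖ₑ ≤ Q1const b * (ENNReal.ofReal (freqNorm b m) *
      restrictedConv (fun k m => freqNorm b k = freqNorm b m) (fun k => ‖ul (pairC A) k‖ₑ)
        (fun k => ‖u k‖ₑ) m) := by
  set conv := restrictedConv (fun k m => freqNorm b k = freqNorm b m)
    (fun k => ‖ul (pairC A) k‖ₑ) (fun k => ‖u k‖ₑ) m with hconv
  have hcoeff {γ : ℝ} (hγ : |γ| = 1) : ‖Q1coeff b u A γ m‖ₑ ≤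
      ‖Complex.I / ((Real.sqrt (vol b) : ℝ) : ℂ)‖ₑ *
        (2 * ((1 + d) * d) * (ENNReal.ofReal (freqNorm b m) * conv)) := by
    rw [Q1coeff]
    split_ifs
    · simp
    rw [enorm_mul, hconv, restrictedConv, ← ENNReal.tsum_mul_left, ← ENNReal.tsum_mul_left]
    gcongr
    refine enorm_tsum_le_tsum_enorm.trans (ENNReal.tsum_le_tsum fun k => ?_)
    rw [Fintype.sum_bool, mul_assoc 2, two_mul]
    exact (enorm_add_le _ _).trans (add_le_add
      (enorm_transport_interaction_le u A (by simp) hγ k m)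
      (enorm_transport_interaction_le u A (by simp) hγ k m))
  rw [Q1res_eq_fromEig, Q1const]
  exact (enorm_pairC_fromEig_le b _ m).trans
    ((add_le_add (hcoeff abs_one) (hcoeff (by norm_num))).trans_eq (by ring))

lemma rpow_le_two_rpow_mul_rpow_neg_mul {σ γ t r : ℝ} (hγ : 0 ≤ γ) (ht : 0 < t) (hr : 0 < r)
    (h : r ≤ 2 * t) : t ^ σ ≤ 2 ^ γ * (r ^ (-γ) * t ^ (σ + γ)) := by
  calc t ^ σ = r ^ γ * (r ^ (-γ) * t ^ σ) := by
        rw [← mul_assoc, ← Real.rpow_add hr, add_neg_cancel, Real.rpow_zero, one_mul]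
    _ ≤ (2 * t) ^ γ * (r ^ (-γ) * t ^ σ) := by gcongr
    _ = 2 ^ γ * (r ^ (-γ) * t ^ (σ + γ)) := by
        rw [Real.mul_rpow two_pos.le ht.le, Real.rpow_add ht]
        ring

lemma freqNorm_rpow_mul_le [NormedAddCommGroup E] (hb : ∀ i, 0 < b i) (σ : ℝ) {γ : ℝ}
    (hγ : 0 ≤ γ) (u : VF d) (c : Lat d → E) {k m : Lat d} (hk : k ≠ 0)
    (hkm : freqNorm b k = freqNorm b m) :
    ENNReal.ofReal (freqNorm b k ^ σ) * (‖c k‖ₑ * ‖u (m - k)‖ₑ) ≤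
      (if k = m then ‖u 0‖ₑ * hsSeq b σ c m else 0) +
        ENNReal.ofReal (2 ^ γ) * (hsSeq b (σ + γ) c k * negOrderSeq b γ u (m - k)) := by
  by_cases hmk : k = m
  · subst hmk
    rw [if_pos rfl, hsSeq, if_neg hk, sub_self]
    exact le_add_right (by ring_nf; rfl)
  have hl : m - k ≠ 0 := sub_ne_zero.2 (Ne.symm hmk)
  have hlk : freqNorm b (m - k) ≤ 2 * freqNorm b k := by
    linarith [freqNorm_sub_le b m k]
  have hreal := ENNReal.ofReal_le_ofReal (rpow_le_two_rpow_mul_rpow_neg_mul (σ := σ) hγ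
    (freqNorm_pos hb hk) (freqNorm_pos hb hl) hlk)
  rw [ENNReal.ofReal_mul (by positivity),
    ENNReal.ofReal_mul (Real.rpow_nonneg (freqNorm_nonneg _ _) _)] at hreal
  rw [if_neg hmk, zero_add, hsSeq, if_neg hk, negOrderSeq, if_neg hl]
  exact (mul_le_mul_left hreal _).trans_eq (by ring)

lemma freqNorm_rpow_mul_restrictedConv_le [NormedAddCommGroup E] (hb : ∀ i, 0 < b i) (σ : ℝ)
    {γ : ℝ} (hγ : 0 ≤ γ) (u : VF d) (c : Lat d → E) {m : Lat d} (hm : m ≠ 0) :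
    ENNReal.ofReal (freqNorm b m ^ σ) * restrictedConv (fun k m => freqNorm b k = freqNorm b m)
        (fun k => ‖ul c k‖ₑ) (fun k => ‖u k‖ₑ) m ≤
      ‖u 0‖ₑ * hsSeq b σ c m +
        ENNReal.ofReal (2 ^ γ) * ∑' l, negOrderSeq b γ u l * hsSeq b (σ + γ) c (m - l) := by
  rw [restrictedConv, ← ENNReal.tsum_mul_left]
  calc _ ≤ ∑' k, ((if k = m then ‖u 0‖ₑ * hsSeq b σ c m else 0) +
          ENNReal.ofReal (2 ^ γ) * (hsSeq b (σ + γ) c k * negOrderSeq b γ u (m - k))) := by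
        refine ENNReal.tsum_le_tsum fun k => ?_
        by_cases hkm : freqNorm b k = freqNorm b m
        · have hk : k ≠ 0 := by
            rintro rfl
            exact (freqNorm_pos hb hm).ne ((freqNorm_zero b).symm.trans hkm)
          rw [if_pos hkm, ul, if_neg hk, ← hkm]
          exact freqNorm_rpow_mul_le hb σ hγ u c hk hkm
        · simp [hkm]
    _ = _ := by
        rw [ENNReal.tsum_add, tsum_ite_eq, ENNReal.tsum_mul_left,
          ← (Equiv.subLeft m).tsum_eq (fun l => negOrderSeq b γ u l * _)]
        simp only [Equiv.subLeft_apply, sub_sub_cancel, mul_comm]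

lemma hsSeq_Q1res_le (hb : ∀ i, 0 < b i) (σ : ℝ) {γ : ℝ} (hγ : 0 ≤ γ) (u : VF d) (A : PairF d)
    (m : Lat d) :
    hsSeq b (σ - 1) (pairC (Q1res b u A)) m ≤ Q1const b * (‖u 0‖ₑ * hsSeq b σ (pairC A) m +
      ENNReal.ofReal (2 ^ γ) *
        ∑' l, negOrderSeq b γ u l * hsSeq b (σ + γ) (pairC A) (m - l)) := by
  have hpoint := enorm_pairC_Q1res_le (b := b) u A m
  by_cases hm : m = 0
  · subst hm
    rw [freqNorm_zero, ENNReal.ofReal_zero, zero_mul, mul_zero] at hpoint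
    rw [hsSeq, if_pos rfl]
    exact hpoint.trans zero_le
  have hpow : ENNReal.ofReal (freqNorm b m ^ (σ - 1)) * ENNReal.ofReal (freqNorm b m) =
      ENNReal.ofReal (freqNorm b m ^ σ) := by
    rw [← ENNReal.ofReal_mul (Real.rpow_nonneg (freqNorm_nonneg b m) _),
      ← Real.rpow_add_one (freqNorm_pos hb hm).ne', sub_add_cancel]
  rw [hsSeq, if_neg hm]
  refine (mul_le_mul_right hpoint _).trans ?_
  rw [mul_left_comm, ← mul_assoc (ENNReal.ofReal _), hpow]
  exact mul_le_mul_right (freqNorm_rpow_mul_restrictedConv_le hb σ hγ u _ hm) _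

lemma hsN_Q1res_le (hb : ∀ i, 0 < b i) (σ : ℝ) {γ : ℝ} (hγ : 0 ≤ γ) (u : VF d) (A : PairF d) :
    hsN b (σ - 1) (pairC (Q1res b u A)) ≤ Q1const b * (1 + ENNReal.ofReal (2 ^ γ)) *
      (hsN b (σ + γ) (pairC A) * (∑' k, negOrderSeq b γ u k) + ‖u 0‖ₑ * hsN b σ (pairC A)) := by
  simp only [hsN_eq_lr_two]
  set X := ‖u 0‖ₑ * lr 2 (hsSeq b σ (pairC A))
  set Y := lr 2 (hsSeq b (σ + γ) (pairC A)) * ∑' k, negOrderSeq b γ u k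
  set K := ENNReal.ofReal (2 ^ γ)
  refine (lr_mono 2 (hsSeq_Q1res_le hb σ hγ u A)).trans ?_
  rw [lr_const_mul two_ne_zero, mul_assoc]
  gcongr
  refine (lr_two_add_le _ _).trans ?_
  rw [lr_const_mul two_ne_zero, lr_const_mul two_ne_zero]
  calc _ ≤ X + K * Y := by
        gcongr
        exact (lr_two_conv_le _ _).trans_eq (mul_comm _ _)
    _ ≤ (X + K * Y) + (Y + K * X) := le_self_add
    _ = (1 + K) * (Y + X) := by ring

end TransportOperator

theorem stmt_16_general
    {d : ℕ} (b : Fin d → ℝ) (hb : ∀ i, 0 < b i) (φ : ℝ → ℝ) (hφ : GoodBump φ) (κ : ℝ) :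
    (∀ σ γ : ℝ, 0 ≤ γ →
      ∃ C : ℝ≥0∞, C < ⊤ ∧
        ∀ (u : VF d) (A : PairF d),
          hsN b (σ - 1) (pairC (Q1res b u A)) ≤
            C * (hsN b (σ + γ) (pairC A) *
                (∑' k : Lat d, if k = 0 then 0
                  else ENNReal.ofReal (freqNorm b k ^ (-γ)) * (‖u k‖₊ : ℝ≥0∞))
              + (‖u 0‖₊ : ℝ≥0∞) * hsN b σ (pairC A))) ∧
    (∀ σ : ℝ, 1/2 < σ → σ ≤ 3/2 →
      ∃ C : ℝ≥0∞, C < ⊤ ∧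
        ∀ A B : PairF d,
          hsN b (σ - 2) (pairC (Q2res b κ A B)) ≤
            C * min (besovN φ b (1/2) 1 (pairC A) * besovN φ b (σ - 1) 1 (pairC B))
                    (besovN φ b (1/2) 1 (pairC B) * besovN φ b (σ - 1) 1 (pairC A))) ∧
    (∀ σ : ℝ, 3/2 ≤ σ →
      ∃ C : ℝ≥0∞, C < ⊤ ∧
        ∀ A B : PairF d,
          hsN b (σ - 2) (pairC (Q2res b κ A B)) ≤
            C * besovN φ b (σ - 1) 1 (pairC A) * besovN φ b (σ - 1) 1 (pairC B)) ∧
    (∀ σ : ℝ, -(1/2) < σ →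
      ∃ C : ℝ≥0∞, C < ⊤ ∧
        ∀ A : PairF d,
          besovN φ b (σ - 1) 1 (pairC (Q2res b κ A A)) ≤
            C * besovN φ b (1/2) 1 (pairC A) * besovN φ b σ 1 (pairC A)) := by
  refine ⟨fun σ γ hγ => ⟨Q1const b * (1 + ENNReal.ofReal (2 ^ γ)), ?_, hsN_Q1res_le hb σ hγ⟩,
    fun σ hσ hσ' => ⟨embeddingConst (σ - 2) * Q2besovConst b κ (σ - 1), ?_,
      hsN_Q2res_le_min hφ hb κ hσ'⟩,
    fun σ hσ => ⟨Q2highConst b κ σ, Q2highConst_lt_top b κ (by linarith),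
      hsN_Q2res_le_of_three_halves_le hφ hb κ hσ⟩,
    fun σ hσ => ⟨Q2besovConst b κ σ * 2, ?_, besovN_Q2res_self_le hφ hb κ σ⟩⟩
  · exact ENNReal.mul_lt_top (Q1const_lt_top b) (by finiteness)
  · exact ENNReal.mul_lt_top (embeddingConst_lt_top _) (Q2besovConst_lt_top b κ (by linarith))
  · exact ENNReal.mul_lt_top (Q2besovConst_lt_top b κ hσ) ENNReal.ofNat_lt_top

/-- (Estimates for the resonant limit operators.) -/
theorem stmt_16
    {d : ℕ} (hd : 2 ≤ d) (b : Fin d → ℝ) (hb : ∀ i, 0 < b i)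
    (φ : ℝ → ℝ) (hφ : GoodBump φ) (κ : ℝ) :
    (∀ σ γ : ℝ, 0 ≤ σ → 0 ≤ γ →
      ∃ C : ℝ≥0∞, C < ⊤ ∧
        ∀ (u : VF d) (A : PairF d),
          (∀ k, divC b u k = 0) → memKerLp b A →
          hsN b (σ - 1) (pairC (Q1res b u A)) ≤
            C * (hsN b (σ + γ) (pairC A) *
                (∑' k : Lat d, if k = 0 then 0
                  else ENNReal.ofReal (freqNorm b k ^ (-γ)) * (‖u k‖₊ : ℝ≥0∞))
              + (‖u 0‖₊ : ℝ≥0∞) * hsN b σ (pairC A))) ∧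
    (∀ σ : ℝ, 1/2 < σ → σ < 3/2 →
      ∃ C : ℝ≥0∞, C < ⊤ ∧
        ∀ A B : PairF d, memKerLp b A → memKerLp b B →
          hsN b (σ - 2) (pairC (Q2res b κ A B)) ≤
            C * min (besovN φ b (1/2) 1 (pairC A) * besovN φ b (σ - 1) 1 (pairC B))
                    (besovN φ b (1/2) 1 (pairC B) * besovN φ b (σ - 1) 1 (pairC A))) ∧
    (∀ σ : ℝ, 3/2 ≤ σ →
      ∃ C : ℝ≥0∞, C < ⊤ ∧
        ∀ A B : PairF d, memKerLp b A → memKerLp b B →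
          hsN b (σ - 2) (pairC (Q2res b κ A B)) ≤
            C * besovN φ b (σ - 1) 1 (pairC A) * besovN φ b (σ - 1) 1 (pairC B)) ∧
    (∀ σ : ℝ, -(1/2) < σ →
      ∃ C : ℝ≥0∞, C < ⊤ ∧
        ∀ A : PairF d, memKerLp b A →
          besovN φ b (σ - 1) 1 (pairC (Q2res b κ A A)) ≤
            C * besovN φ b (1/2) 1 (pairC A) * besovN φ b σ 1 (pairC A)) := by
  obtain ⟨h₁, h₂, h₃, h₄⟩ := stmt_16_general b hb φ hφ κ
  exact ⟨fun σ γ _ hγ => (h₁ σ γ hγ).imp fun C hC => ⟨hC.1, fun u A _ _ => hC.2 u A⟩,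
    fun σ hσ hσ' => (h₂ σ hσ hσ'.le).imp fun C hC => ⟨hC.1, fun A B _ _ => hC.2 A B⟩,
    fun σ hσ => (h₃ σ hσ).imp fun C hC => ⟨hC.1, fun A B _ _ => hC.2 A B⟩,
    fun σ hσ => (h₄ σ hσ).imp fun C hC => ⟨hC.1, fun A _ => hC.2 A⟩⟩

end LowMach
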